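/- For 𝔽_q[x,y], the number p_n of pairs (f,g) forming an 𝔽_q-algebra automorphism with max(deg f, deg g) = n, for n > 1, equals (q(q−1)(q+1))² · Σ ((q−1)/q)^k · q^(n_1+⋯+n_k), where the sum is over all ordered factorizations n = n_1⋯n_k with all n_i ≥ 2; for n = 1, p_1 = q³(q−1)²(q+1). -/

import Mathlib

open MvPolynomial

/-- The degree of an automorphism `φ = (f, g)` of `K[x,y]`: `max(deg f, deg g)`. -/
noncomputable def autDeg {K : Type*} [CommSemiring K]
    (φ : MvPolynomial (Fin 2) K ≃ₐ[K] MvPolynomial (Fin 2) K) : ℕ :=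
  max (φ (X 0)).totalDegree (φ (X 1)).totalDegree

/-- The homomorphism `K[x,y] → K[x,y][t][ℚ]` recording the weights of monomials. -/
noncomputable def weightHom {K : Type*} [Field K] (w : Fin 2 → ℚ) :
    MvPolynomial (Fin 2) K →ₐ[K] AddMonoidAlgebra (Polynomial (MvPolynomial (Fin 2) K)) ℚ :=
  aeval fun i => AddMonoidAlgebra.single (w i) (Polynomial.C (X i))

theorem weightHom_monomial {K : Type*} [Field K] (w : Fin 2 → ℚ) (m : Fin 2 →₀ ℕ) (c : K) :
    weightHom w (monomial m c) =
      AddMonoidAlgebra.single (Finsupp.weight w m) (Polynomial.C (monomial m c)) := by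
  rw [weightHom, aeval_monomial, Finsupp.prod_fintype _ _ (by simp)]
  rw [monomial_eq, Finsupp.prod_fintype _ _ (by simp)]
  simp only [Fin.prod_univ_two, AddMonoidAlgebra.single_pow, AddMonoidAlgebra.single_mul_single,]
  simp [Finsupp.weight_apply, Finsupp.sum_fintype, Polynomial.algebraMap_apply, MvPolynomial.algebraMap_eq]

theorem coeff_weightHom {K : Type*} [Field K] (w : Fin 2 → ℚ) (u : MvPolynomial (Fin 2) K)
    (d : ℚ) :
    (weightHom w u).coeff d = Polynomial.C (weightedHomogeneousComponent w d u) := by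
  induction u using MvPolynomial.induction_on' with
  | monomial m c =>
    rw [weightHom_monomial]
    have : weightedHomogeneousComponent w d (monomial m c) = if Finsupp.weight w m = d then monomial m c else 0 := by
      ext m'
      rw [coeff_weightedHomogeneousComponent]
      by_cases h : m = m'
      · subst h; split_ifs <;> simp
      · split_ifs <;> simp [coeff_monomial, h]
    rw [this, AddMonoidAlgebra.coeff_single, Finsupp.single_apply]
    split_ifs <;> simp
  | add p q hp hq => simp [hp, hq]

/-- The homomorphism `K[x,y][t] → K[x,y][t][ℚ]` recording the weights of monomials, where `t` has
weight `τ`. -/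
noncomputable def weightHomT {K : Type*} [Field K] (w : Fin 2 → ℚ) (τ : ℚ) :
    Polynomial (MvPolynomial (Fin 2) K) →ₐ[K]
      AddMonoidAlgebra (Polynomial (MvPolynomial (Fin 2) K)) ℚ :=
  Polynomial.eval₂AlgHom (weightHom w) (AddMonoidAlgebra.single τ Polynomial.X)
    fun a => Commute.all (weightHom w a) _

theorem coeff_weightHomT {K : Type*} [Field K] (w : Fin 2 → ℚ) (τ : ℚ)
    (P : Polynomial (MvPolynomial (Fin 2) K)) (d : ℚ) (i : ℕ) :
    ((weightHomT w τ P).coeff d).coeff i =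
      weightedHomogeneousComponent w (d - i * τ) (P.coeff i) := by
  induction P using Polynomial.induction_on' with
  | add p q hp hq => simp [hp, hq]
  | monomial n a =>
    have : weightHomT w τ (Polynomial.monomial n a) =
        weightHom w a * AddMonoidAlgebra.single (n * τ) (Polynomial.X ^ n) := by
      simp [weightHomT, Polynomial.eval₂_monomial, AddMonoidAlgebra.single_pow]
    rw [this, AddMonoidAlgebra.coeff_mul_single_eq_coeff_mul (d - n * τ) (fun _ _ => eq_sub_iff_add_eq.symm)]
    rw [coeff_weightHom, Polynomial.coeff_C_mul_X_pow, Polynomial.coeff_monomial]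
    by_cases h : i = n
    · simp [h]
    · simp [h, Ne.symm h]

/-- The top weight part of an algebra homomorphism, and its effect on top weight parts. -/
theorem coeff_map_of_weight_le {K R : Type*} [Field K] [CommRing R] [Algebra K R]
    (w : Fin 2 → ℚ)
    (F : MvPolynomial (Fin 2) K →ₐ[K] AddMonoidAlgebra R ℚ)
    (hF : ∀ i, ∀ e, w i < e → (F (X i)).coeff e = 0)
    (u : MvPolynomial (Fin 2) K) (d : ℚ) (hu : ∀ m ∈ u.support, Finsupp.weight w m ≤ d) :
    (∀ e, d < e → (F u).coeff e = 0) ∧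
    (F u).coeff d =
      aeval (fun i => (F (X i)).coeff (w i)) (weightedHomogeneousComponent w d u) := by
  classical
  have hmul : ∀ (p q : AddMonoidAlgebra R ℚ) (a b : ℚ),
      (∀ e, a < e → p.coeff e = 0) → (∀ e, b < e → q.coeff e = 0) →
      (∀ e, a + b < e → (p * q).coeff e = 0) ∧
      (p * q).coeff (a + b) = p.coeff a * q.coeff b := by
    intro p q a b hp hq
    have hp' : ∀ e ∈ p.coeff.support, e ≤ a := fun e he =>
      not_lt.1 fun h => (Finsupp.mem_support_iff.1 he) (hp e h)
    have hq' : ∀ e ∈ q.coeff.support, e ≤ b := fun e he =>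
      not_lt.1 fun h => (Finsupp.mem_support_iff.1 he) (hq e h)
    simp_rw [AddMonoidAlgebra.coeff_mul, Finsupp.sum]
    constructor
    · intro e he
      refine Finset.sum_eq_zero fun x hx => Finset.sum_eq_zero fun y hy => if_neg ?_
      have := hp' x hx
      have := hq' y hy
      linarith
    · rw [Finset.sum_eq_single a, Finset.sum_eq_single b, if_pos rfl]
      · intro y hy hne
        rw [if_neg]
        intro h
        exact hne (add_left_cancel h)
      · intro h; rw [if_pos rfl, Finsupp.notMem_support_iff.1 h, mul_zero]
      · refine fun x hx hne => Finset.sum_eq_zero fun y hy => if_neg ?_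
        have := (hp' x hx).lt_of_ne hne
        have := hq' y hy
        linarith
      · refine fun h => Finset.sum_eq_zero fun y _ => ite_eq_right_iff.mpr fun _ => ?_
        rw [Finsupp.notMem_support_iff.mp h, zero_mul]
  have hone : (∀ e : ℚ, 0 < e → (1 : AddMonoidAlgebra R ℚ).coeff e = 0) ∧
      (1 : AddMonoidAlgebra R ℚ).coeff 0 = 1 := by
    rw [AddMonoidAlgebra.one_def]
    refine ⟨fun e he => ?_, by simp⟩
    rw [AddMonoidAlgebra.coeff_single, Finsupp.single_apply, if_neg he.ne]
  have hpow : ∀ (p : AddMonoidAlgebra R ℚ) (a : ℚ) (n : ℕ),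
      (∀ e, a < e → p.coeff e = 0) →
      (∀ e, n * a < e → (p ^ n).coeff e = 0) ∧
      (p ^ n).coeff (n * a) = p.coeff a ^ n := by
    intro p a n hp
    induction n with
    | zero => simpa using hone
    | succ n ih =>
      have := hmul _ _ _ _ ih.1 hp
      rw [← pow_succ, ih.2, ← pow_succ] at this
      rw [Nat.cast_succ]
      rwa [add_mul, one_mul]
  have hmon : ∀ m : Fin 2 →₀ ℕ,
      (∀ e, Finsupp.weight w m < e → (F (monomial m 1)).coeff e = 0) ∧ (F (monomial m 1)).coeff (Finsupp.weight w m) =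
        aeval (fun i => (F (X i)).coeff (w i)) (monomial m (1 : K)) := by
    intro m
    have := hmul _ _ _ _ (hpow _ _ (m 0) (hF 0)).1 (hpow _ _ (m 1) (hF 1)).1
    rw [(hpow _ _ (m 0) (hF 0)).2, (hpow _ _ (m 1) (hF 1)).2] at this
    have h1 : Finsupp.weight w m = m 0 * w 0 + m 1 * w 1 := by
      simp [Finsupp.weight_apply, Finsupp.sum_fintype]
    have h2 : monomial m (1 : K) = X 0 ^ m 0 * X 1 ^ m 1 := by
      rw [monomial_eq, Finsupp.prod_fintype _ _ (by simp)]; simp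
    rw [h1, h2]
    simpa using this
  have key : ∀ v : MvPolynomial (Fin 2) K, v.support ⊆ u.support →
     (∀ e, d < e → (F v).coeff e = 0) ∧
    (F v).coeff d =
      aeval (fun i => (F (X i)).coeff (w i)) (weightedHomogeneousComponent w d v) := by
    intro v hv
    rw [v.as_sum, map_sum, map_sum, map_sum]
    constructor
    · intro e he
      rw [AddMonoidAlgebra.coeff_sum, Finsupp.finsetSum_apply]
      refine Finset.sum_eq_zero fun m hm => ?_
      have : monomial m (coeff m v) = coeff m v • monomial m (1 : K) := by simp [smul_monomial]
      rw [this, map_smul, AddMonoidAlgebra.coeff_smul, Finsupp.smul_apply,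
        (hmon m).1 e ((hu m (hv hm)).trans_lt he), smul_zero]
    · rw [AddMonoidAlgebra.coeff_sum, Finsupp.finsetSum_apply]
      refine Finset.sum_congr rfl fun m hm => ?_
      have : monomial m (coeff m v) = coeff m v • monomial m (1 : K) := by simp [smul_monomial]
      rw [this, map_smul, map_smul, map_smul, AddMonoidAlgebra.coeff_smul, Finsupp.smul_apply]
      congr 1
      rcases (hu m (hv hm)).lt_or_eq with h | h
      · rw [weightedHomogeneousComponent_eq_zero', map_zero]
        · exact (hmon m).1 d h
        · intro m' hm'
          have := support_monomial_subset hm'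
          rw [Finset.mem_singleton] at this
          exact this ▸ h.ne
      · rw [← h, (hmon m).2]
        congr 1
        symm
        apply weightedHomogeneousComponent_eq_self
        exact isWeightedHomogeneous_monomial _ _ _ rfl
  exact key u subset_rfl

/-- A nontrivial one-parameter family of endomorphisms of `K[x,y]` fixing `g` degenerates to a
nontrivial family fixing the top weight part of `g`. -/
theorem exists_graded_family {K : Type*} [Field K]
    (E : MvPolynomial (Fin 2) K →ₐ[K] Polynomial (MvPolynomial (Fin 2) K))
    (hE0 : ∀ u, (E u).coeff 0 = u) (hE1 : ∃ j, E (X j) ≠ Polynomial.C (X j))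
    (g : MvPolynomial (Fin 2) K) (hg : E g = Polynomial.C g) (w : Fin 2 → ℚ) (D : ℚ)
    (hD : ∀ m ∈ g.support, Finsupp.weight w m ≤ D) :
    ∃ E' : MvPolynomial (Fin 2) K →ₐ[K] Polynomial (MvPolynomial (Fin 2) K),
      (∀ u, (E' u).coeff 0 = u) ∧ (∃ j, E' (X j) ≠ Polynomial.C (X j)) ∧
      E' (weightedHomogeneousComponent w D g) =
        Polynomial.C (weightedHomogeneousComponent w D g) := by
  classical
  let S : Finset (Fin 2 × ℕ × (Fin 2 →₀ ℕ)) := Finset.univ.biUnion fun j =>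
    ((E (X j)).support.erase 0).biUnion fun i =>
      ((E (X j)).coeff i).support.image fun m => (j, i, m)
  have hS : ∀ j i m, (j, i, m) ∈ S ↔ i ≠ 0 ∧ m ∈ ((E (X j)).coeff i).support := by
    intro j i m
    simp only [S, Finset.mem_biUnion, Finset.mem_univ, true_and, Finset.mem_image,
      Finset.mem_erase, Prod.mk.injEq]
    constructor
    · rintro ⟨_, _, ⟨h, _⟩, _, h', rfl, rfl, rfl⟩
      exact ⟨h, h'⟩
    · rintro ⟨h, h'⟩
      refine ⟨j, i, ⟨h, ?_⟩, m, h', rfl, rfl, rfl⟩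
      rw [Polynomial.mem_support_iff]
      intro h0
      simp [h0] at h'
  have hSne : S.Nonempty := by
    obtain ⟨j, hj⟩ := hE1
    by_contra hS0
    apply hj
    ext i : 1
    rw [Polynomial.coeff_C]
    split_ifs with hi
    · rw [hi, hE0]
    · by_contra h
      obtain ⟨m, hm⟩ := support_nonempty.2 h
      exact hS0 ⟨_, (hS j i m).2 ⟨hi, hm⟩⟩
  obtain ⟨⟨j₀, i₀, m₀⟩, h₀, hmin⟩ := S.exists_min_image
    (fun x => (w x.1 - Finsupp.weight w x.2.2) / x.2.1) hSne
  obtain ⟨hi₀, hm₀⟩ := (hS _ _ _).1 h₀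
  set τ : ℚ := (w j₀ - Finsupp.weight w m₀) / i₀ with hτ
  have hle : ∀ j i, ∀ m ∈ ((E (X j)).coeff i).support,
      Finsupp.weight w m + i * τ ≤ w j := by
    intro j i m hm
    rcases Nat.eq_zero_or_pos i with rfl | hi
    · rw [hE0, support_X, Finset.mem_singleton] at hm
      subst hm
      simp [Finsupp.weight_single]
    · have h := hmin _ ((hS j i m).2 ⟨hi.ne', hm⟩)
      simp only at h
      have hi' : (0 : ℚ) < i := by exact_mod_cast hi
      rw [le_div_iff₀ hi'] at h
      linarith
  let F := (weightHomT w τ).comp E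
  have hF : ∀ j e, w j < e → (F (X j)).coeff e = 0 := by
    intro j e he
    ext i : 1
    simp only [F, AlgHom.comp_apply, coeff_weightHomT, Polynomial.coeff_zero]
    refine weightedHomogeneousComponent_eq_zero' _ _ fun m hm h => ?_
    have := hle j i m hm
    linarith
  have hfilt := (coeff_map_of_weight_le w F hF g D hD).2
  refine ⟨aeval fun j => (F (X j)).coeff (w j), ?_, ⟨j₀, ?_⟩, ?_⟩
  · intro u
    have : ((Polynomial.aeval (0 : MvPolynomial (Fin 2) K)).restrictScalars K).comp
        (aeval fun j => (F (X j)).coeff (w j)) = AlgHom.id K (MvPolynomial (Fin 2) K) := by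
      ext1 j
      simp only [AlgHom.comp_apply, aeval_X, AlgHom.restrictScalars_apply,
        ← Polynomial.coeff_zero_eq_aeval_zero, F, coeff_weightHomT, hE0]
      simp only [Nat.cast_zero, zero_mul, sub_zero, AlgHom.id_apply]
      exact weightedHomogeneousComponent_eq_self (isWeightedHomogeneous_X K w j)
    have h := congrArg (fun f => f u) this
    simpa [Polynomial.coeff_zero_eq_eval_zero] using h
  · rw [aeval_X]
    intro h
    have h1 := congrArg (fun P => (P.coeff i₀).coeff m₀) h
    simp only [F, AlgHom.comp_apply, coeff_weightHomT, Polynomial.coeff_C, if_neg hi₀,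
      coeff_weightedHomogeneousComponent, coeff_zero] at h1
    rw [if_pos] at h1
    · exact (mem_support_iff.1 hm₀) h1
    · have : (i₀ : ℚ) ≠ 0 := by exact_mod_cast hi₀
      rw [hτ]; field_simp; ring
  · rw [← hfilt]
    ext i : 1
    simp only [F, AlgHom.comp_apply, coeff_weightHomT, hg, Polynomial.coeff_C]
    split_ifs with hi
    · simp [hi]
    · simp

/-- A derivation of `A` acts on the coefficients of polynomials over `A`. -/
noncomputable def coeffDerivation {A : Type*} [CommRing A] (D : Derivation ℤ A A) :
    Derivation ℤ (Polynomial A) (Polynomial A) :=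
  letI : Differential A := ⟨D⟩
  Differential.mapCoeffs

theorem coeff_coeffDerivation {A : Type*} [CommRing A] (D : Derivation ℤ A A)
    (p : Polynomial A) (i : ℕ) : (coeffDerivation D p).coeff i = D (p.coeff i) := by
  let _ : Differential A := ⟨D⟩
  exact Differential.coeff_mapCoeffs p i

theorem coeffDerivation_C {A : Type*} [CommRing A] (D : Derivation ℤ A A)
    (a : A) : coeffDerivation D (Polynomial.C a) = Polynomial.C (D a) := by
  let _ : Differential A := ⟨D⟩
  exact Differential.mapCoeffs_C a

theorem natDegree_coeffDerivation_le {A : Type*} [CommRing A] (D : Derivation ℤ A A)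
    (p : Polynomial A) : (coeffDerivation D p).natDegree ≤ p.natDegree := by
  rw [Polynomial.natDegree_le_iff_coeff_eq_zero]
  intro N hN
  rw [coeff_coeffDerivation, Polynomial.coeff_eq_zero_of_natDegree_lt hN, map_zero]

/-- There is no nonconstant polynomial family of points on the curve `x ^ r - c y ^ s = h` through
the generic point, where `h` is the generic value. -/
theorem natDegree_eq_zero_of_pow_sub_pow {K : Type*} [Field K]
    (a b : Polynomial (MvPolynomial (Fin 2) K)) (ha : a.coeff 0 = X 0) (hb : b.coeff 0 = X 1)
    (r s : ℕ) (hr : 2 ≤ r) (hs : 2 ≤ s) (hrs : r.Coprime s) (c : K) (hc : c ≠ 0)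
    (h : a ^ r - Polynomial.C (C c) * b ^ s = Polynomial.C (X 0 ^ r - C c * X 1 ^ s)) :
    a.natDegree = 0 ∧ b.natDegree = 0 := by
  have hab : b.natDegree = 0 → a.natDegree = 0 := by
    intro hb
    rw [Polynomial.eq_C_of_natDegree_eq_zero hb, ← map_pow, ← map_mul, sub_eq_iff_eq_add,
      ← map_add] at h
    have := congrArg Polynomial.natDegree h
    rw [Polynomial.natDegree_pow, Polynomial.natDegree_C] at this
    rcases Nat.mul_eq_zero.1 this with h | h <;> omega
  have hba : a.natDegree = 0 → b.natDegree = 0 := by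
    intro ha
    rw [Polynomial.eq_C_of_natDegree_eq_zero ha, ← map_pow, sub_eq_iff_eq_add,
      ← sub_eq_iff_eq_add', ← map_sub] at h
    have := congrArg Polynomial.natDegree h
    rw [Polynomial.natDegree_C_mul (by simpa using hc), Polynomial.natDegree_pow,
      Polynomial.natDegree_C] at this
    rcases Nat.mul_eq_zero.1 this.symm with h | h <;> omega
  let d : Fin 2 → Derivation ℤ (Polynomial (MvPolynomial (Fin 2) K))
    (Polynomial (MvPolynomial (Fin 2) K)) := fun i =>
      coeffDerivation ((pderiv i).restrictScalars ℤ)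
  have hC : ∀ i u, d i (Polynomial.C u) = Polynomial.C (pderiv i u) := fun i u =>
    coeffDerivation_C _ _
  have hdeg : ∀ i u, (d i u).natDegree ≤ u.natDegree := fun i u => natDegree_coeffDerivation_le _ _
  have hcoeff : ∀ i u n, (d i u).coeff n = pderiv i (u.coeff n) := fun i u n =>
    coeff_coeffDerivation _ _ _
  have e0 := congrArg (d 0) h
  have e1 := congrArg (d 1) h
  simp only [map_sub, Derivation.leibniz, Derivation.leibniz_pow, hC, pderiv_C, map_zero,
    pderiv_X_self, pderiv_X_of_ne (show (0 : Fin 2) ≠ 1 by decide),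
    pderiv_X_of_ne (show (1 : Fin 2) ≠ 0 by decide), smul_eq_mul, nsmul_eq_mul, mul_zero, add_zero,
    sub_zero, mul_one, zero_sub, map_mul, map_natCast] at e0 e1
  set J := d 0 a * d 1 b - d 1 a * d 0 b with hJ
  have hJ0 : J ≠ 0 := by
    intro hJ0
    have := congrArg (fun p => Polynomial.coeff p 0) hJ0
    simp [hJ, Polynomial.mul_coeff_zero, hcoeff, ha, hb] at this
  have ha0 : a ≠ 0 := by
    rintro rfl
    exact X_ne_zero (R := K) (0 : Fin 2) (by simpa using ha.symm)
  have hb0 : b ≠ 0 := by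
    rintro rfl
    exact X_ne_zero (R := K) (1 : Fin 2) (by simpa using hb.symm)
  have hCne : (Polynomial.C (C c) : Polynomial (MvPolynomial (Fin 2) K)) ≠ 0 := by simpa using hc
  have hcast : ∀ n : ℕ, (n : K) ≠ 0 → (n : Polynomial (MvPolynomial (Fin 2) K)) ≠ 0 := by
    intro n hn h0
    apply hn
    rwa [← map_natCast (Polynomial.C (R := MvPolynomial (Fin 2) K)),
      ← map_natCast (C (σ := Fin 2) (R := K)), Polynomial.C_eq_zero, C_eq_zero] at h0
  have hcast0 : ∀ n : ℕ, (n : K) = 0 → (n : Polynomial (MvPolynomial (Fin 2) K)) = 0 := by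
    intro n hn
    rw [← map_natCast (Polynomial.C (R := MvPolynomial (Fin 2) K)),
      ← map_natCast (C (σ := Fin 2) (R := K)), hn, map_zero, map_zero]
  have hcop : (r : K) ≠ 0 ∨ (s : K) ≠ 0 := by
    by_contra! h0
    obtain ⟨u, v, huv⟩ := Nat.isCoprime_iff_coprime.2 hrs
    have := congrArg (Int.cast : ℤ → K) huv
    push_cast at this
    rw [h0.1, h0.2] at this
    simp at this
  have hprod : ∀ (p u : Polynomial (MvPolynomial (Fin 2) K)) (n : ℕ) (v : MvPolynomial (Fin 2) K),
      2 ≤ n → v ≠ 0 → p ^ (n - 1) * u = Polynomial.C v → p.natDegree = 0 := by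
    intro p u n v hn hv hp
    have hv' : p ^ (n - 1) * u ≠ 0 := by rw [hp]; simpa using hv
    have := congrArg Polynomial.natDegree hp
    rw [Polynomial.natDegree_mul (left_ne_zero_of_mul hv') (right_ne_zero_of_mul hv'),
      Polynomial.natDegree_pow, Polynomial.natDegree_C] at this
    rcases Nat.mul_eq_zero.1 (Nat.eq_zero_of_add_eq_zero_right this) with h | h
    · omega
    · exact h
  by_cases hr0 : (r : K) = 0
  · have hs0 := hcast _ (hcop.resolve_left (not_not.2 hr0))
    rw [hcast0 r hr0, zero_mul, zero_sub, neg_inj] at e1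
    have e := mul_left_cancel₀ hs0 (mul_left_cancel₀ hCne e1)
    have := hprod b _ s _ hs (pow_ne_zero _ (X_ne_zero 1)) e
    exact ⟨hab this, this⟩
  by_cases hs0 : (s : K) = 0
  · rw [hcast0 s hs0, zero_mul, mul_zero, sub_zero] at e0
    have e := mul_left_cancel₀ (hcast r hr0) e0
    have := hprod a _ r _ hr (pow_ne_zero _ (X_ne_zero 0)) e
    exact ⟨this, hba this⟩
  have hr0 := hcast r hr0
  have hs0 := hcast s hs0
  have hdC : ∀ v : MvPolynomial (Fin 2) K, ∀ p : Polynomial (MvPolynomial (Fin 2) K),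
      (Polynomial.C v * p).natDegree ≤ p.natDegree := fun v p => Polynomial.natDegree_C_mul_le v p
  have hdn : ∀ n : ℕ, ∀ p : Polynomial (MvPolynomial (Fin 2) K),
      ((n : Polynomial (MvPolynomial (Fin 2) K)) * p).natDegree ≤ p.natDegree := fun n p => by
    rw [← map_natCast (Polynomial.C (R := MvPolynomial (Fin 2) K))]
    exact hdC _ _
  have j0 : (r : Polynomial (MvPolynomial (Fin 2) K)) * (a ^ (r - 1) * J) =
      (r : Polynomial (MvPolynomial (Fin 2) K)) * (Polynomial.C (X 0 ^ (r - 1)) * d 1 b) +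
        Polynomial.C (C c) * ((s : Polynomial (MvPolynomial (Fin 2) K)) * (Polynomial.C (X 1 ^ (s - 1)) * d 0 b)) := by
    rw [hJ]
    linear_combination d 1 b * e0 - d 0 b * e1
  have j1 : Polynomial.C (C c) * ((s : Polynomial (MvPolynomial (Fin 2) K)) * (b ^ (s - 1) * J)) =
      (r : Polynomial (MvPolynomial (Fin 2) K)) * (Polynomial.C (X 0 ^ (r - 1)) * d 1 a) +
        Polynomial.C (C c) * ((s : Polynomial (MvPolynomial (Fin 2) K)) * (Polynomial.C (X 1 ^ (s - 1)) * d 0 a)) := by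
    rw [hJ]
    linear_combination d 1 a * e0 - d 0 a * e1
  have hbound : ∀ u : Polynomial (MvPolynomial (Fin 2) K),
      ((r : Polynomial (MvPolynomial (Fin 2) K)) * (Polynomial.C (X 0 ^ (r - 1)) * d 1 u) +
        Polynomial.C (C c) * ((s : Polynomial (MvPolynomial (Fin 2) K)) * (Polynomial.C (X 1 ^ (s - 1)) * d 0 u))).natDegree ≤
        u.natDegree := fun u => by
    refine (Polynomial.natDegree_add_le _ _).trans (max_le ?_ ?_)
    · exact (hdn _ _).trans ((hdC _ _).trans (hdeg _ _))
    · exact (hdC _ _).trans ((hdn _ _).trans ((hdC _ _).trans (hdeg _ _)))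
  have k0 : (r - 1) * a.natDegree ≤ b.natDegree := by
    refine le_trans ?_ (hbound b)
    rw [← j0, Polynomial.natDegree_mul hr0 (mul_ne_zero (pow_ne_zero _ ha0) hJ0),
      Polynomial.natDegree_mul (pow_ne_zero _ ha0) hJ0, Polynomial.natDegree_pow]
    omega
  have k1 : (s - 1) * b.natDegree ≤ a.natDegree := by
    refine le_trans ?_ (hbound a)
    rw [← j1, Polynomial.natDegree_mul hCne (mul_ne_zero hs0 (mul_ne_zero (pow_ne_zero _ hb0) hJ0)),
      Polynomial.natDegree_mul hs0 (mul_ne_zero (pow_ne_zero _ hb0) hJ0),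
      Polynomial.natDegree_mul (pow_ne_zero _ hb0) hJ0, Polynomial.natDegree_pow]
    omega
  obtain ⟨r', rfl⟩ : ∃ r', r = r' + 2 := ⟨r - 2, by omega⟩
  obtain ⟨s', rfl⟩ : ∃ s', s = s' + 2 := ⟨s - 2, by omega⟩
  have : b.natDegree = 0 := by
    by_contra hb1
    have hb1 : 0 < b.natDegree := Nat.pos_of_ne_zero hb1
    simp only [Nat.add_succ_sub_one] at k0 k1
    have hr' : r' = 0 := by nlinarith
    have hs' : s' = 0 := by nlinarith
    subst hr' hs'
    norm_num at hrs
  exact ⟨hab this, this⟩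

theorem eq_C_of_dvd_of_eq_C {K : Type*} [Field K]
    (E : MvPolynomial (Fin 2) K →ₐ[K] Polynomial (MvPolynomial (Fin 2) K))
    (hE0 : ∀ u, (E u).coeff 0 = u) {u v : MvPolynomial (Fin 2) K} (huv : u ∣ v) (hv : v ≠ 0)
    (hEv : E v = Polynomial.C v) : E u = Polynomial.C u := by
  obtain ⟨z, rfl⟩ := huv
  have hne : ∀ y, y ≠ 0 → E y ≠ 0 := fun y hy h => hy <| by rw [← hE0 y, h, Polynomial.coeff_zero]
  have h := congrArg Polynomial.natDegree hEv
  rw [map_mul, Polynomial.natDegree_mul (hne _ (left_ne_zero_of_mul hv))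
    (hne _ (right_ne_zero_of_mul hv)), Polynomial.natDegree_C] at h
  rw [Polynomial.eq_C_of_natDegree_eq_zero (Nat.eq_zero_of_add_eq_zero_right h), hE0]

/-- Every component of an automorphism of `K[x,y]` is fixed by a nontrivial one-parameter family of
endomorphisms. -/
theorem exists_family {K : Type*} [Field K]
    (φ : MvPolynomial (Fin 2) K ≃ₐ[K] MvPolynomial (Fin 2) K) :
    ∃ E : MvPolynomial (Fin 2) K →ₐ[K] Polynomial (MvPolynomial (Fin 2) K),
      (∀ u, (E u).coeff 0 = u) ∧ (∃ j, E (X j) ≠ Polynomial.C (X j)) ∧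
      E (φ (X 1)) = Polynomial.C (φ (X 1)) := by
  let sh : MvPolynomial (Fin 2) K →ₐ[K] Polynomial (MvPolynomial (Fin 2) K) :=
    aeval ![Polynomial.C (X 0) + Polynomial.X, Polynomial.C (X 1)]
  have hsh : ∀ u, (sh u).coeff 0 = u := by
    intro u
    have : ((Polynomial.aeval (0 : MvPolynomial (Fin 2) K)).restrictScalars K).comp sh =
        AlgHom.id K (MvPolynomial (Fin 2) K) := by
      ext1 j
      fin_cases j <;> simp [sh]
    have h := congrArg (fun f => f u) this
    simpa [Polynomial.coeff_zero_eq_eval_zero] using h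
  let E := (Polynomial.mapAlgHom (φ : MvPolynomial (Fin 2) K →ₐ[K] MvPolynomial (Fin 2) K)).comp
    (sh.comp (φ.symm : MvPolynomial (Fin 2) K →ₐ[K] MvPolynomial (Fin 2) K))
  refine ⟨E, fun u => ?_, ?_, ?_⟩
  · simp [E, hsh]
  · by_contra! h
    have : E = (Algebra.ofId (MvPolynomial (Fin 2) K) _).restrictScalars K := by
      ext1 j
      exact h j
    have h0 := congrArg (fun f => (f (φ (X 0))).coeff 1) this
    simp [E, sh, Algebra.ofId_apply, Polynomial.algebraMap_eq] at h0
  · simp [E, sh]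

/-- The shape of a component of an automorphism of `K[x,y]` along the edge of its Newton polygon
spanned by its degrees in `x` and `y`. -/
theorem weightedHomogeneousComponent_eq_pow {K : Type*} [Field K] [IsAlgClosed K]
    (g : MvPolynomial (Fin 2) K)
    (E : MvPolynomial (Fin 2) K →ₐ[K] Polynomial (MvPolynomial (Fin 2) K))
    (hE0 : ∀ u, (E u).coeff 0 = u) (hE1 : ∃ j, E (X j) ≠ Polynomial.C (X j))
    (hg : E g = Polynomial.C g) (h0 : 0 < degreeOf 0 g) (h1 : 0 < degreeOf 1 g) :
    (∀ m ∈ g.support, degreeOf 1 g * m 0 + degreeOf 0 g * m 1 ≤ degreeOf 0 g * degreeOf 1 g) ∧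
    ∃ i s d : _, ∃ l c : K, degreeOf i g = d ∧ degreeOf (i + 1) g = s * d ∧
      weightedHomogeneousComponent (fun k => (degreeOf (k + 1) g : ℚ))
        (degreeOf 0 g * degreeOf 1 g : ℚ) g = C c * (X i - C l * X (i + 1) ^ s) ^ d := by
  classical
  set a := degreeOf 0 g with ha
  set b := degreeOf 1 g with hb
  set w : Fin 2 → ℚ := fun k => (degreeOf (k + 1) g : ℚ) with hw
  have hw0 : w 0 = b := rfl
  have hw1 : w 1 = a := rfl
  have hwt : ∀ m : Fin 2 →₀ ℕ, Finsupp.weight w m = b * m 0 + a * m 1 := by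
    intro m
    simp [Finsupp.weight_apply, Finsupp.sum_fintype, hw0, hw1]
    ring
  have hma : ∀ m ∈ g.support, m 0 ≤ a := degreeOf_le_iff.1 le_rfl
  have hmb : ∀ m ∈ g.support, m 1 ≤ b := degreeOf_le_iff.1 le_rfl
  have hg0 : g ≠ 0 := by
    rintro rfl
    simp [ha] at h0
  have hle : ∀ m ∈ g.support, b * m 0 + a * m 1 ≤ a * b := by
    by_contra! hcon
    obtain ⟨m₀, hm₀, hmax⟩ := g.support.exists_max_image (Finsupp.weight w) (support_nonempty.2 hg0)
    have hbig : a * b < b * m₀ 0 + a * m₀ 1 := by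
      obtain ⟨m, hm, hlt⟩ := hcon
      have := hmax m hm
      rw [hwt, hwt] at this
      exact hlt.trans_le (by exact_mod_cast this)
    obtain ⟨E', hE0', ⟨j, hj⟩, hE'⟩ := exists_graded_family E hE0 hE1 g hg w _ hmax
    apply hj
    refine eq_C_of_dvd_of_eq_C E' hE0' ?_ ?_ hE'
    · rw [as_sum (weightedHomogeneousComponent w _ g)]
      refine Finset.dvd_sum fun m hm => X_dvd_monomial.2 (Or.inr ?_)
      rw [mem_support_iff, coeff_weightedHomogeneousComponent] at hm
      obtain ⟨hmw, hmg⟩ : Finsupp.weight w m = Finsupp.weight w m₀ ∧ coeff m g ≠ 0 := by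
        by_contra! h
        exact hm (ite_eq_right_iff.2 h)
      have hmg := mem_support_iff.2 hmg
      rw [hwt, hwt] at hmw
      have hmw : b * m 0 + a * m 1 = b * m₀ 0 + a * m₀ 1 := by exact_mod_cast hmw
      have h2 := hma m hmg
      have h3 := hmb m hmg
      rw [← hmw] at hbig
      have : ∀ j : Fin 2, m j ≠ 0 := by
        rw [Fin.forall_fin_two]
        constructor
        · intro h; rw [h] at hbig; nlinarith
        · intro h; rw [h] at hbig; nlinarith
      exact this j
    · intro h
      have := congrArg (coeff m₀) h
      rw [coeff_weightedHomogeneousComponent, if_pos rfl] at this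
      exact (mem_support_iff.1 hm₀) this
  refine ⟨hle, ?_⟩
  obtain ⟨E', hE0', hE1', hE'⟩ := exists_graded_family E hE0 hE1 g hg w (a * b) (by
    intro m hm
    rw [hwt]
    exact_mod_cast hle m hm)
  set h := weightedHomogeneousComponent w (a * b) g with hh
  have hcoeff : ∀ m, coeff m h = if b * m 0 + a * m 1 = a * b then coeff m g else 0 := by
    intro m
    rw [hh, coeff_weightedHomogeneousComponent, hwt]
    congr 1
    rw [eq_iff_iff]
    exact_mod_cast Iff.rfl
  obtain ⟨d, r, s, hd, hcop, har, hbs⟩ : ∃ d r s : ℕ, 0 < d ∧ r.Coprime s ∧ a = r * d ∧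
      b = s * d := by
    obtain ⟨r, s, hrs, h1, h2⟩ := Nat.exists_coprime a b
    exact ⟨_, r, s, Nat.gcd_pos_of_pos_left b h0, hrs, h1, h2⟩
  have hr : 0 < r := Nat.pos_of_mul_pos_right (har ▸ h0)
  have hs : 0 < s := Nat.pos_of_mul_pos_right (hbs ▸ h1)
  let M : ℕ → ℕ → (Fin 2 →₀ ℕ) := fun k l => Finsupp.single 0 k + Finsupp.single 1 l
  have hM0 : ∀ k l, M k l 0 = k := by simp [M]
  have hM1 : ∀ k l, M k l 1 = l := by simp [M]
  have hMX : ∀ k l (c : K), monomial (M k l) c = C c * (X 0 ^ k * X 1 ^ l) := by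
    intro k l c
    rw [X_pow_eq_monomial, X_pow_eq_monomial, monomial_mul, C_mul_monomial, mul_one, mul_one]
  let H : Polynomial K :=
    ∑ i ∈ Finset.range (d + 1), Polynomial.monomial i (coeff (M (r * i) (s * (d - i))) g)
  have hH : ∀ i ≤ d, H.coeff i = coeff (M (r * i) (s * (d - i))) g := by
    intro i hi
    simp [H, Polynomial.coeff_monomial]
    omega
  have hHd : H.natDegree ≤ d := by
    refine Polynomial.natDegree_sum_le_of_forall_le _ _ fun i hi => ?_
    exact (Polynomial.natDegree_monomial_le _).trans (by simpa [Nat.lt_succ_iff] using hi)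
  have hM : ∀ m : Fin 2 →₀ ℕ, m = M (m 0) (m 1) := by
    intro m
    ext j
    fin_cases j
    · exact (hM0 _ _).symm
    · exact (hM1 _ _).symm
  have hHa : H.coeff d ≠ 0 := by
    obtain ⟨m, hm, hma⟩ := g.support.exists_mem_eq_sup (support_nonempty.2 hg0) (fun m => m 0)
    rw [← degreeOf_eq_sup, ← ha] at hma
    have := hle m hm
    have hm1 : m 1 = 0 := by
      rw [← hma, mul_comm b a] at this
      exact (Nat.mul_eq_zero.1 (by omega : a * m 1 = 0)).resolve_left h0.ne'
    rw [hH d le_rfl, ← har, Nat.sub_self, mul_zero, hma, ← hm1, ← hM m]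
    exact mem_support_iff.1 hm
  have hHb : H.coeff 0 ≠ 0 := by
    obtain ⟨m, hm, hmb⟩ := g.support.exists_mem_eq_sup (support_nonempty.2 hg0) (fun m => m 1)
    rw [← degreeOf_eq_sup, ← hb] at hmb
    have := hle m hm
    have hm1 : m 0 = 0 := by
      rw [← hmb] at this
      exact (Nat.mul_eq_zero.1 (by omega : b * m 0 = 0)).resolve_left h1.ne'
    rw [hH 0 (Nat.zero_le d), mul_zero, Nat.sub_zero, ← hbs, hmb, ← hm1, ← hM m]
    exact mem_support_iff.1 hm
  have hhH : h = aeval ![X 0 ^ r, X 1 ^ s] (H.homogenize d) := by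
    have hsum : aeval ![X 0 ^ r, X 1 ^ s] (H.homogenize d) =
        ∑ kl ∈ Finset.HasAntidiagonal.antidiagonal d, monomial (M (r * kl.1) (s * kl.2)) (H.coeff kl.1) := by
      rw [Polynomial.homogenize, map_sum]
      refine Finset.sum_congr rfl fun kl _ => ?_
      rw [aeval_monomial, Finsupp.prod_fintype _ _ (by simp), hMX]
      simp [algebraMap_eq, pow_mul]
    rw [hsum]
    ext m
    rw [hcoeff, coeff_sum]
    simp only [coeff_monomial]
    split_ifs with hm
    · have hm' : s * m 0 + r * m 1 = r * s * d := by
        apply Nat.eq_of_mul_eq_mul_left hd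
        rw [har, hbs] at hm
        linarith
      obtain ⟨k, hk⟩ : r ∣ m 0 := by
        refine hcop.dvd_of_dvd_mul_left ((Nat.dvd_add_iff_left (dvd_mul_right r (m 1))).2 ?_)
        rw [hm', mul_assoc]
        exact dvd_mul_right _ _
      obtain ⟨l, hl⟩ : s ∣ m 1 := by
        refine hcop.symm.dvd_of_dvd_mul_left ((Nat.dvd_add_iff_right (dvd_mul_right s (m 0))).2 ?_)
        rw [hm', mul_comm r, mul_assoc]
        exact dvd_mul_right _ _
      have hkl : k + l = d := by
        rw [hk, hl] at hm'
        apply Nat.eq_of_mul_eq_mul_left (Nat.mul_pos hr hs)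
        linarith
      rw [Finset.sum_eq_single (k, l)]
      · rw [if_pos (by simp only; rw [hM m, hk, hl]), hH k (by omega), hM m, hk, hl,
          show d - k = l by omega]
      · rintro ⟨k', l'⟩ hkl' hne
        rw [Finset.HasAntidiagonal.mem_antidiagonal] at hkl'
        refine if_neg fun hmm => hne ?_
        have h2 : m 0 = r * k' := by rw [← hmm, hM0]
        have := Nat.eq_of_mul_eq_mul_left hr (hk.symm.trans h2)
        simp only [Prod.mk.injEq] at *
        omega
      · intro h
        simp [hkl] at h
    · symm
      refine Finset.sum_eq_zero fun kl hkl => if_neg fun hmm => hm ?_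
      rw [Finset.HasAntidiagonal.mem_antidiagonal] at hkl
      rw [← hmm, hM0, hM1, har, hbs, ← hkl]
      ring
  have hlin : ∀ l : K, (Polynomial.X - Polynomial.C l).homogenize 1 = X 0 - C l * X 1 := by
    intro l
    rw [sub_eq_add_neg, Polynomial.homogenize_add, Polynomial.homogenize_neg,
      Polynomial.homogenize_X one_ne_zero, Polynomial.homogenize_C]
    ring
  have hh0 : h ≠ 0 := by
    intro h'
    rw [h'] at hcoeff
    have := hcoeff (M (r * d) (s * (d - d)))
    rw [← hH d le_rfl, coeff_zero, Nat.sub_self, mul_zero, hM0, hM1, mul_zero, add_zero, ← har,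
      mul_comm, if_pos rfl] at this
    exact hHa this.symm
  have hHdeg : H.natDegree = d := le_antisymm hHd (Polynomial.le_natDegree_of_ne_zero hHa)
  have hH0 : H ≠ 0 := by
    rintro h
    rw [h] at hHa
    exact hHa rfl
  have hroot : ∀ l, H.IsRoot l → E' (X 0 ^ r - C l * X 1 ^ s) =
      Polynomial.C (X 0 ^ r - C l * X 1 ^ s) := by
    intro l hl
    refine eq_C_of_dvd_of_eq_C E' hE0' ?_ hh0 hE'
    obtain ⟨Q, hQ⟩ := Polynomial.dvd_iff_isRoot.2 hl
    have hQd : Q.natDegree ≤ d - 1 := by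
      have := hHdeg
      rw [hQ, Polynomial.natDegree_mul (Polynomial.X_sub_C_ne_zero l)
        (right_ne_zero_of_mul (hQ ▸ hH0)), Polynomial.natDegree_X_sub_C] at this
      omega
    rw [hhH, hQ]
    nth_rw 1 [show d = 1 + (d - 1) by omega]
    rw [Polynomial.homogenize_mul _ _ (Polynomial.natDegree_X_sub_C_le l) hQd, hlin, map_mul]
    refine dvd_mul_of_dvd_left ?_ _
    simp [algebraMap_eq]
  have hEC : ∀ k, E' (C k) = Polynomial.C (C k) := fun k => E'.commutes k
  have hXE : ¬ ((E' (X 0)).natDegree = 0 ∧ (E' (X 1)).natDegree = 0) := by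
    rintro ⟨h2, h3⟩
    obtain ⟨j, hj⟩ := hE1'
    apply hj
    fin_cases j
    · simpa [hE0'] using Polynomial.eq_C_of_natDegree_eq_zero h2
    · simpa [hE0'] using Polynomial.eq_C_of_natDegree_eq_zero h3
  obtain ⟨l, hl⟩ := IsAlgClosed.exists_root H
    (fun h => hd.ne' (hHdeg ▸ Polynomial.natDegree_eq_of_degree_eq_some h))
  have hl0 : l ≠ 0 := by
    rintro rfl
    rw [Polynomial.IsRoot.def, ← Polynomial.coeff_zero_eq_eval_zero] at hl
    exact hHb hl
  have huniq : ∀ l', H.IsRoot l' → l' = l := by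
    intro l' hl'
    by_contra hne
    have hsub : l - l' ≠ 0 := sub_ne_zero.2 (Ne.symm hne)
    have e := hroot l hl
    have e' := hroot l' hl'
    simp only [map_sub, map_mul, hEC] at e e'
    apply hXE
    constructor
    · rw [eq_C_of_dvd_of_eq_C E' hE0' (v := C (l - l') * X 0 ^ r), Polynomial.natDegree_C]
      · exact dvd_mul_of_dvd_right (dvd_pow_self _ hr.ne') _
      · exact mul_ne_zero (C_ne_zero.2 hsub) (pow_ne_zero _ (X_ne_zero _))
      · simp only [map_sub, map_mul, hEC]
        linear_combination Polynomial.C (C l) * e' - Polynomial.C (C l') * e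
    · rw [eq_C_of_dvd_of_eq_C E' hE0' (v := C (l - l') * X 1 ^ s), Polynomial.natDegree_C]
      · exact dvd_mul_of_dvd_right (dvd_pow_self _ hs.ne') _
      · exact mul_ne_zero (C_ne_zero.2 hsub) (pow_ne_zero _ (X_ne_zero _))
      · simp only [map_sub, map_mul, hEC]
        linear_combination e' - e
  obtain ⟨c, hc⟩ : ∃ c, H = Polynomial.C c * (Polynomial.X - Polynomial.C l) ^ d := by
    have hroots : H.roots = Multiset.replicate d l := by
      rw [Multiset.eq_replicate]
      refine ⟨?_, fun l' hl' => huniq l' (Polynomial.isRoot_of_mem_roots hl')⟩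
      rw [← hHdeg, (IsAlgClosed.splits H).natDegree_eq_card_roots]
    refine ⟨H.leadingCoeff, ?_⟩
    conv_lhs => rw [(IsAlgClosed.splits H).eq_prod_roots, hroots]
    simp
  have hhc : h = C c * (X 0 ^ r - C l * X 1 ^ s) ^ d := by
    have hpow : ∀ n, ((Polynomial.X - Polynomial.C l) ^ n).homogenize n =
        (X 0 - C l * X 1) ^ n := by
      intro n
      induction n with
      | zero => simp
      | succ n ih =>
        rw [pow_succ, Polynomial.homogenize_mul _ _ _ (Polynomial.natDegree_X_sub_C_le l), ih, hlin,
          pow_succ]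
        simp [Polynomial.natDegree_pow]
    rw [hhH, hc, Polynomial.homogenize_C_mul, hpow]
    simp [algebraMap_eq]
  have hrs : r = 1 ∨ s = 1 := by
    by_contra! hrs
    refine hXE (natDegree_eq_zero_of_pow_sub_pow _ _ (hE0' _) (hE0' _) r s (by omega) (by omega)
      hcop l hl0 ?_)
    rw [← hroot l hl, map_sub, map_mul, hEC, map_pow, map_pow]
  rcases hrs with rfl | rfl
  · exact ⟨0, s, d, l, c, by simpa using har, hbs, by simpa using hhc⟩
  · refine ⟨1, r, d, l⁻¹, c * (-l) ^ d, by simpa using hbs, har, ?_⟩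
    rw [hhc, map_mul, mul_assoc, map_pow, ← mul_pow]
    congr 2
    have : C l * C l⁻¹ = (1 : MvPolynomial (Fin 2) K) := by rw [← C_mul, mul_inv_cancel₀ hl0, C_1]
    change _ = C (-l) * (X 1 - C l⁻¹ * X 0 ^ r)
    rw [map_neg, pow_one]
    linear_combination -X 0 ^ r * this

theorem weightedHomogeneousComponent_map {K : Type*} [Field K] (w : Fin 2 → ℚ)
    (ψ : MvPolynomial (Fin 2) K →ₐ[K] MvPolynomial (Fin 2) K)
    (hψ : ∀ i, IsWeightedHomogeneous w (ψ (X i)) (w i)) (e : ℚ) (u : MvPolynomial (Fin 2) K) :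
    weightedHomogeneousComponent w e (ψ u) = ψ (weightedHomogeneousComponent w e u) := by
  induction u using MvPolynomial.induction_on' with
  | add p q hp hq => simp only [map_add, hp, hq]
  | monomial m c =>
    have h1 : IsWeightedHomogeneous w (monomial m c) (Finsupp.weight w m) :=
      isWeightedHomogeneous_monomial _ _ _ rfl
    have h2 : IsWeightedHomogeneous w (ψ (monomial m c)) (Finsupp.weight w m) := by
      have hp := ((hψ 0).pow (m 0)).mul ((hψ 1).pow (m 1))
      have hm : ψ (monomial m c) = C c * (ψ (X 0) ^ m 0 * ψ (X 1) ^ m 1) := by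
        rw [monomial_eq, Finsupp.prod_fintype _ _ (by simp), Fin.prod_univ_two]
        simp [algHom_C, algebraMap_eq]
      rw [hm]
      have := (isWeightedHomogeneous_C w c).mul hp
      simpa [Finsupp.weight_apply, Finsupp.sum_fintype] using this
    by_cases h : Finsupp.weight w m = e
    · rw [← h, weightedHomogeneousComponent_eq_self h1, weightedHomogeneousComponent_eq_self h2]
    · rw [weightedHomogeneousComponent_of_mem (n := Finsupp.weight w m) h1,
        weightedHomogeneousComponent_of_mem (n := Finsupp.weight w m) h2, if_neg (Ne.symm h),
        if_neg (Ne.symm h), map_zero]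

theorem add_one_add_one (i : Fin 2) : i + 1 + 1 = i := by
  fin_cases i <;> rfl

theorem eq_or_eq_add_one (i k : Fin 2) : k = i ∨ k = i + 1 := by
  fin_cases i <;> fin_cases k <;> decide

/-- The elementary automorphism adding a polynomial in the other variable to the variable `i`. -/
noncomputable def elementary {K : Type*} [Field K] (i : Fin 2) (P : Polynomial K) :
    MvPolynomial (Fin 2) K ≃ₐ[K] MvPolynomial (Fin 2) K :=
  AlgEquiv.ofAlgHom
    (aeval (Function.update X i (X i + Polynomial.aeval (X (i + 1)) P)))
    (aeval (Function.update X i (X i - Polynomial.aeval (X (i + 1)) P)))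
    (by
      ext1 j
      have hi : i + 1 ≠ i := by fin_cases i <;> decide
      rcases eq_or_ne j i with rfl | h
      · simp [← Polynomial.aeval_algHom_apply, hi]
      · simp [h])
    (by
      ext1 j
      have hi : i + 1 ≠ i := by fin_cases i <;> decide
      rcases eq_or_ne j i with rfl | h
      · simp [← Polynomial.aeval_algHom_apply, hi]
      · simp [h])

theorem elementary_X_self {K : Type*} [Field K] (i : Fin 2) (P : Polynomial K) :
    elementary i P (X i) = X i + Polynomial.aeval (X (i + 1)) P := by
  simp [elementary]

theorem elementary_X_add_one {K : Type*} [Field K] (i : Fin 2) (P : Polynomial K) :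
    elementary i P (X (i + 1)) = X (i + 1) := by
  have hi : i + 1 ≠ i := by fin_cases i <;> decide
  simp [elementary, hi]

/-- The sum of the partial degrees of a component of an automorphism of `K[x,y]` which involves both
variables can be lowered by an elementary automorphism. -/
theorem exists_elementary_degreeOf_lt {K : Type*} [Field K] [IsAlgClosed K]
    (φ : MvPolynomial (Fin 2) K ≃ₐ[K] MvPolynomial (Fin 2) K)
    (h0 : 0 < degreeOf 0 (φ (X 1))) (h1 : 0 < degreeOf 1 (φ (X 1))) :
    ∃ i P, degreeOf 0 (elementary i P (φ (X 1))) + degreeOf 1 (elementary i P (φ (X 1))) <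
      degreeOf 0 (φ (X 1)) + degreeOf 1 (φ (X 1)) := by
  obtain ⟨E, hE0, hE1, hE⟩ := exists_family φ
  set g := φ (X 1)
  obtain ⟨hle, i, s, d, l, c, hd, hsd, hcomp⟩ :=
    weightedHomogeneousComponent_eq_pow g E hE0 hE1 hE h0 h1
  set w : Fin 2 → ℚ := fun k => (degreeOf (k + 1) g : ℚ) with hw
  have hpos : ∀ k, 0 < degreeOf k g := Fin.forall_fin_two.2 ⟨h0, h1⟩
  have hD : (degreeOf 0 g * degreeOf 1 g : ℚ) = degreeOf i g * degreeOf (i + 1) g := by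
    fin_cases i
    · rfl
    · exact mul_comm _ _
  have hwt : ∀ m : Fin 2 →₀ ℕ, Finsupp.weight w m =
      degreeOf (i + 1) g * m i + degreeOf i g * m (i + 1) := by
    intro m
    have : Finsupp.weight w m = degreeOf 1 g * m 0 + degreeOf 0 g * m 1 := by
      simp [Finsupp.weight_apply, Finsupp.sum_fintype, hw]
      ring
    rw [this]
    fin_cases i
    · rfl
    · exact add_comm _ _
  have hle' : ∀ m ∈ g.support, Finsupp.weight w m ≤ degreeOf i g * degreeOf (i + 1) g := by
    intro m hm
    rw [← hD]
    have : Finsupp.weight w m = degreeOf 1 g * m 0 + degreeOf 0 g * m 1 := by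
      simp [Finsupp.weight_apply, Finsupp.sum_fintype, hw]
      ring
    rw [this]
    exact_mod_cast hle m hm
  rw [hD] at hcomp
  set P : Polynomial K := Polynomial.C l * Polynomial.X ^ s
  let ψ := elementary i P
  have hψi : ψ (X i) = X i + C l * X (i + 1) ^ s := by
    rw [elementary_X_self]
    simp [P, algebraMap_eq]
  have hψj : ψ (X (i + 1)) = X (i + 1) := elementary_X_add_one i P
  have hψ : ∀ k, IsWeightedHomogeneous w (ψ (X k)) (w k) := by
    have hi : IsWeightedHomogeneous w (ψ (X i)) (w i) := by
      rw [hψi]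
      refine (isWeightedHomogeneous_X K w i).add ?_
      have := (isWeightedHomogeneous_C w l).mul ((isWeightedHomogeneous_X K w (i + 1)).pow s)
      convert! this using 1
      simp [hw, add_one_add_one, hd, hsd]
    have hj : IsWeightedHomogeneous w (ψ (X (i + 1))) (w (i + 1)) := by
      rw [hψj]
      exact isWeightedHomogeneous_X K w (i + 1)
    intro k
    obtain rfl | rfl : k = i ∨ k = i + 1 := eq_or_eq_add_one i k
    · exact hi
    · exact hj
  have hmap := weightedHomogeneousComponent_map w (ψ : _ →ₐ[K] _) hψ
  simp only [AlgEquiv.coe_toAlgHom] at hmap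
  have hle'' : ∀ m ∈ (ψ g).support, Finsupp.weight w m ≤ degreeOf i g * degreeOf (i + 1) g := by
    intro m hm
    by_contra! hlt
    have h := congrArg (coeff m) (hmap (Finsupp.weight w m) g)
    rw [coeff_weightedHomogeneousComponent, if_pos rfl, weightedHomogeneousComponent_eq_zero',
      map_zero] at h
    · exact mem_support_iff.1 hm h
    · intro m' hm' heq
      exact absurd (hle' m' hm') (by rw [heq]; exact not_le.2 hlt)
  have hle3 : ∀ m ∈ (ψ g).support, degreeOf (i + 1) g * m i + degreeOf i g * m (i + 1) ≤
      degreeOf i g * degreeOf (i + 1) g := by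
    intro m hm
    have := hle'' m hm
    rw [hwt] at this
    exact_mod_cast this
  have hi := hpos i
  have hj := hpos (i + 1)
  have hdi : degreeOf i (ψ g) ≤ degreeOf i g := by
    rw [degreeOf_le_iff]
    intro m hm
    have := hle3 m hm
    nlinarith
  have hdj : degreeOf (i + 1) (ψ g) < degreeOf (i + 1) g := by
    rw [degreeOf_lt_iff hj]
    intro m hm
    have h3 := hle3 m hm
    by_contra! hge
    have hmi : m i = 0 := by
      by_contra hne
      have := Nat.pos_of_ne_zero hne
      nlinarith
    have hmj : m (i + 1) = degreeOf (i + 1) g := by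
      refine le_antisymm ?_ hge
      rw [hmi] at h3
      nlinarith
    have h := congrArg (coeff m) (hmap (degreeOf i g * degreeOf (i + 1) g) g)
    rw [coeff_weightedHomogeneousComponent, if_pos (by rw [hwt, hmi, hmj]; simp), hcomp] at h
    have hsimp : ψ (C c * (X i - C l * X (i + 1) ^ s) ^ d) = C c * X i ^ d := by
      have hC : ∀ k, ψ (C k) = C k := fun k => ψ.commutes k
      rw [map_mul, map_pow, map_sub, map_mul, map_pow, hC, hC, hψi, hψj, add_sub_cancel_right]
    rw [hsimp, coeff_C_mul, coeff_X_pow, if_neg, mul_zero] at h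
    · exact mem_support_iff.1 hm h
    · rintro rfl
      simp at hmi
      omega
  refine ⟨i, P, ?_⟩
  have hsum : ∀ u : MvPolynomial (Fin 2) K,
      degreeOf 0 u + degreeOf 1 u = degreeOf i u + degreeOf (i + 1) u := by
    intro u
    fin_cases i
    · rfl
    · exact add_comm _ _
  rw [hsum, hsum]
  exact add_lt_add_of_le_of_lt hdi hdj

/-- The automorphism of `K[x,y]` exchanging the variables. -/
noncomputable def swapVars (K : Type*) [Field K] :
    MvPolynomial (Fin 2) K ≃ₐ[K] MvPolynomial (Fin 2) K :=
  renameEquiv K (Equiv.swap 0 1)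

theorem swapVars_X_zero {K : Type*} [Field K] : swapVars K (X 0) = X 1 := by
  simp [swapVars]

theorem swapVars_X_one {K : Type*} [Field K] : swapVars K (X 1) = X 0 := by
  simp [swapVars]

theorem swapVars_mul_swapVars {K : Type*} [Field K] : swapVars K * swapVars K = 1 := by
  apply AlgEquiv.coe_toAlgHom_injective
  ext1 j
  fin_cases j <;> simp [swapVars_X_zero, swapVars_X_one]

/-- The generators of the group of tame automorphisms: the exchange of the variables and the
triangular automorphisms. -/
def tameGenerators (K : Type*) [Field K] :
    Set (MvPolynomial (Fin 2) K ≃ₐ[K] MvPolynomial (Fin 2) K) :=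
  {φ | φ = swapVars K ∨ ∃ (a b c : K) (P : Polynomial K), a ≠ 0 ∧ b ≠ 0 ∧
    φ (X 0) = C a * X 0 + Polynomial.aeval (X 1) P ∧ φ (X 1) = C b * X 1 + C c}

theorem swapVars_mem_closure {K : Type*} [Field K] :
    swapVars K ∈ Submonoid.closure (tameGenerators K) :=
  Submonoid.subset_closure (Or.inl rfl)

theorem elementary_mem_closure {K : Type*} [Field K] (i : Fin 2) (P : Polynomial K) :
    elementary i P ∈ Submonoid.closure (tameGenerators K) := by
  have h0 : ∀ P, elementary 0 P ∈ Submonoid.closure (tameGenerators K) := by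
    intro P
    refine Submonoid.subset_closure (Or.inr ⟨1, 1, 0, P, one_ne_zero, one_ne_zero, ?_, ?_⟩)
    · simpa using elementary_X_self 0 P
    · simpa using elementary_X_add_one 0 P
  fin_cases i
  · exact h0 P
  · have : elementary 1 P = swapVars K * elementary 0 P * swapVars K := by
      apply AlgEquiv.coe_toAlgHom_injective
      ext1 j
      fin_cases j
      · simpa [swapVars_X_zero, swapVars_X_one, show elementary 0 P (X 1) = X 1 from
          elementary_X_add_one 0 P] using elementary_X_add_one 1 P
      · simp [swapVars_X_zero, swapVars_X_one, elementary_X_self,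
          ← Polynomial.aeval_algHom_apply]
    rw [show ((fun i => i) ⟨1, Nat.lt_add_one 1⟩ : Fin 2) = 1 from rfl, this]
    exact mul_mem (mul_mem swapVars_mem_closure (h0 P)) swapVars_mem_closure

theorem elementary_neg_mul_elementary {K : Type*} [Field K] (i : Fin 2) (P : Polynomial K) :
    elementary i (-P) * elementary i P = 1 := by
  have hi := elementary_X_add_one i P
  have hi' := elementary_X_add_one i (-P)
  apply AlgEquiv.coe_toAlgHom_injective
  ext1 j
  obtain rfl | rfl := eq_or_eq_add_one i j
  · simp [elementary_X_self, hi', ← Polynomial.aeval_algHom_apply]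
  · simp [hi, hi']

theorem exists_eq_aeval_X_one {K : Type*} [Field K] (u : MvPolynomial (Fin 2) K)
    (hu : degreeOf 0 u = 0) : ∃ P : Polynomial K, u = Polynomial.aeval (X 1) P := by
  refine ⟨∑ m ∈ u.support, Polynomial.monomial (m 1) (coeff m u), ?_⟩
  conv_lhs => rw [u.as_sum]
  rw [map_sum]
  refine Finset.sum_congr rfl fun m hm => ?_
  have := degreeOf_le_iff.1 hu.le m hm
  rw [Polynomial.aeval_monomial, monomial_eq, Finsupp.prod_fintype _ _ (by simp), algebraMap_eq]
  simp [Nat.le_zero.1 this]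

theorem totalDegree_aeval_le {K σ : Type*} [Field K] (f : MvPolynomial σ K) (P : Polynomial K) :
    (Polynomial.aeval f P).totalDegree ≤ P.natDegree * f.totalDegree := by
  rw [Polynomial.aeval_eq_sum_range]
  refine totalDegree_finsetSum_le fun i hi => (totalDegree_smul_le _ _).trans
    ((totalDegree_pow _ _).trans ?_)
  exact Nat.mul_le_mul_right _ (Nat.lt_succ_iff.1 (Finset.mem_range.1 hi))

theorem totalDegree_C_mul {K σ : Type*} [Field K] (f : MvPolynomial σ K) {c : K} (hc : c ≠ 0) :
    (C c * f).totalDegree = f.totalDegree := by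
  refine le_antisymm ((totalDegree_mul _ _).trans (by simp)) ?_
  conv_lhs => rw [show f = C c⁻¹ * (C c * f) by rw [← mul_assoc, ← C_mul, inv_mul_cancel₀ hc]; simp]
  exact (totalDegree_mul _ _).trans (by simp)

theorem totalDegree_pow_eq {K σ : Type*} [Field K] (f : MvPolynomial σ K) (n : ℕ) :
    (f ^ n).totalDegree = n * f.totalDegree := by
  rcases eq_or_ne f 0 with rfl | hf
  · rcases eq_or_ne n 0 with rfl | hn
    · simp
    · simp [hn]
  induction n with
  | zero => simp
  | succ n ih => rw [pow_succ, totalDegree_mul_of_isDomain (pow_ne_zero n hf) hf, ih]; ring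

theorem totalDegree_aeval {K σ : Type*} [Field K] (f : MvPolynomial σ K) (P : Polynomial K) :
    (Polynomial.aeval f P).totalDegree = P.natDegree * f.totalDegree := by
  rcases Nat.eq_zero_or_pos (P.natDegree * f.totalDegree) with h | h
  · exact le_antisymm (totalDegree_aeval_le f P) (h ▸ Nat.zero_le _)
  have hP := Nat.pos_of_mul_pos_right h
  have hf := Nat.pos_of_mul_pos_left h
  have hP0 : P ≠ 0 := by
    rintro rfl
    simp at hP
  have hlead : (Polynomial.aeval f
      (Polynomial.C P.leadingCoeff * Polynomial.X ^ P.natDegree)).totalDegree = P.natDegree * f.totalDegree := by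
    rw [map_mul, Polynomial.aeval_C, algebraMap_eq, map_pow, Polynomial.aeval_X,
      totalDegree_C_mul _ (Polynomial.leadingCoeff_ne_zero.2 hP0), totalDegree_pow_eq]
  conv_lhs => rw [← P.eraseLead_add_C_mul_X_pow, map_add]
  rw [totalDegree_add_eq_right_of_totalDegree_lt, hlead]
  rw [hlead]
  refine (totalDegree_aeval_le _ _).trans_lt (Nat.mul_lt_mul_of_pos_right ?_ hf)
  have := P.eraseLead_natDegree_le
  omega

/-- An automorphism of `K[x,y]` whose second component does not involve `x` is triangular. -/
theorem mem_tameGenerators_of_degreeOf_eq_zero {K : Type*} [Field K]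
    (φ : MvPolynomial (Fin 2) K ≃ₐ[K] MvPolynomial (Fin 2) K)
    (h : degreeOf 0 (φ (X 1)) = 0) : φ ∈ tameGenerators K := by
  right
  obtain ⟨Q, hQ⟩ := exists_eq_aeval_X_one _ h
  have hQ1 : Q.natDegree = 1 := by
    have := congrArg (fun u => (φ.symm u).totalDegree) hQ
    simp only [AlgEquiv.symm_apply_apply, totalDegree_X, ← Polynomial.aeval_algHom_apply,
      totalDegree_aeval] at this
    exact Nat.eq_one_of_mul_eq_one_right this.symm
  set e := finSuccEquiv K 1
  have heC : ∀ k, e (C k) = Polynomial.C (C k) := fun k => e.commutes k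
  obtain ⟨g₀, hg₀⟩ : ∃ g₀, e (φ (X 1)) = Polynomial.C g₀ := by
    rw [← natDegree_finSuccEquiv] at h
    exact ⟨_, Polynomial.eq_C_of_natDegree_eq_zero h⟩
  let θ : MvPolynomial (Fin 2) K →ₐ[K] Polynomial (MvPolynomial (Fin 1) K) :=
    aeval ![Polynomial.X, Polynomial.C g₀]
  have hθ : ∀ u, (θ u).comp (e (φ (X 0))) = e (φ u) := by
    have : ((Polynomial.aeval (e (φ (X 0)))).restrictScalars K).comp θ =
        e.toAlgHom.comp φ.toAlgHom := by
      ext1 j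
      fin_cases j
      · simp [θ]
      · simp [θ, hg₀, Polynomial.algebraMap_eq]
    intro u
    exact congrArg (fun f => f u) this
  have hcomp := hθ (φ.symm (X 0))
  set U := θ (φ.symm (X 0))
  rw [AlgEquiv.apply_symm_apply, finSuccEquiv_X_zero] at hcomp
  have hdeg := congrArg Polynomial.natDegree hcomp
  rw [Polynomial.natDegree_comp, Polynomial.natDegree_X] at hdeg
  obtain ⟨u₁, u₀, hu⟩ := Polynomial.exists_eq_X_add_C_of_natDegree_le_one
    (Nat.eq_one_of_mul_eq_one_right hdeg).le
  obtain ⟨f₁, f₀, hf⟩ := Polynomial.exists_eq_X_add_C_of_natDegree_le_one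
    (Nat.eq_one_of_mul_eq_one_left hdeg).le
  have hunit : u₁ * f₁ = 1 := by
    rw [hu, hf] at hcomp
    have := congrArg (fun p => Polynomial.coeff p 1) hcomp
    simpa using this
  obtain ⟨a, ha, hfa⟩ := isUnit_iff_eq_C_of_isReduced.1 (IsUnit.of_mul_eq_one_right _ hunit)
  obtain ⟨P, hP⟩ := exists_eq_aeval_X_one (φ (X 0) - C a * X 0) (by
    rw [← natDegree_finSuccEquiv]
    change (e _).natDegree = 0
    rw [map_sub, hf, map_mul, heC, finSuccEquiv_X_zero, hfa, add_sub_cancel_left,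
      Polynomial.natDegree_C])
  obtain ⟨b, c, hbc⟩ := Polynomial.exists_eq_X_add_C_of_natDegree_le_one hQ1.le
  refine ⟨a, b, c, P, ha.ne_zero, ?_, by rw [← hP]; ring, by rw [hQ, hbc]; simp [algebraMap_eq]⟩
  rintro rfl
  rw [hbc] at hQ1
  simp at hQ1

/-- Over an algebraically closed field, every automorphism of `K[x,y]` is tame. -/
theorem mem_closure_tameGenerators {K : Type*} [Field K] [IsAlgClosed K]
    (φ : MvPolynomial (Fin 2) K ≃ₐ[K] MvPolynomial (Fin 2) K) :
    φ ∈ Submonoid.closure (tameGenerators K) := by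
  by_cases h0 : degreeOf 0 (φ (X 1)) = 0
  · exact Submonoid.subset_closure (mem_tameGenerators_of_degreeOf_eq_zero φ h0)
  by_cases h1 : degreeOf 1 (φ (X 1)) = 0
  · have : φ = swapVars K * (swapVars K * φ) := by
      rw [← mul_assoc, swapVars_mul_swapVars, one_mul]
    rw [this]
    refine mul_mem swapVars_mem_closure
      (Submonoid.subset_closure (mem_tameGenerators_of_degreeOf_eq_zero _ ?_))
    rw [AlgEquiv.mul_apply, swapVars, renameEquiv_apply]
    have := degreeOf_rename_of_injective (p := φ (X 1)) (Equiv.swap (0 : Fin 2) 1).injective 1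
    rwa [Equiv.swap_apply_right, h1] at this
  · obtain ⟨i, P, hlt⟩ :=
      exists_elementary_degreeOf_lt φ (Nat.pos_of_ne_zero h0) (Nat.pos_of_ne_zero h1)
    have : φ = elementary i (-P) * (elementary i P * φ) := by
      rw [← mul_assoc, elementary_neg_mul_elementary, one_mul]
    rw [this]
    exact mul_mem (elementary_mem_closure _ _) (mem_closure_tameGenerators (elementary i P * φ))
termination_by degreeOf 0 (φ (X 1)) + degreeOf 1 (φ (X 1))
decreasing_by simpa using hlt

/-- The pairs of polynomials obtained from a pair of polynomials of degree at most one by repeatedly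
passing from `(f, g)` to `(g, f + P(g))` with `deg P ≥ 2`. -/
inductive IsDegreeChain {K σ : Type*} [Field K] : MvPolynomial σ K → MvPolynomial σ K → Prop
  | affine (f g : MvPolynomial σ K) (hf : f.totalDegree ≤ 1) (hg : g.totalDegree ≤ 1) :
      IsDegreeChain f g
  | step (f g : MvPolynomial σ K) (P : Polynomial K) (h : IsDegreeChain f g)
      (hg : 1 ≤ g.totalDegree) (hP : 2 ≤ P.natDegree) :
      IsDegreeChain g (f + Polynomial.aeval g P)

theorem totalDegree_affine_le {K σ : Type*} [Field K] {f g : MvPolynomial σ K}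
    (hf : f.totalDegree ≤ 1) (hg : g.totalDegree ≤ 1) (a b c : K) :
    (C a * f + C b * g + C c).totalDegree ≤ 1 := by
  refine (totalDegree_add _ _).trans (max_le ((totalDegree_add _ _).trans (max_le ?_ ?_)) ?_)
  · exact (totalDegree_mul _ _).trans (by simpa using hf)
  · exact (totalDegree_mul _ _).trans (by simpa using hg)
  · simp

theorem totalDegree_add_C_eq {K σ : Type*} [Field K] (f : MvPolynomial σ K) (c : K) :
    (f + C c).totalDegree = f.totalDegree := by
  refine le_antisymm ((totalDegree_add _ _).trans (by simp)) ?_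
  conv_lhs => rw [show f = (f + C c) + C (-c) by simp]
  exact (totalDegree_add _ _).trans (by simp)

theorem IsDegreeChain.affine_change {K σ : Type*} [Field K] {f g : MvPolynomial σ K}
    (h : IsDegreeChain f g) (a b c d e : K) (ha : a ≠ 0) (hb : b ≠ 0) :
    IsDegreeChain (C a * f + C c) (C b * g + C d * f + C e) := by
  induction h generalizing a b c d e with
  | affine f g hf hg =>
    refine .affine _ _ ?_ (totalDegree_affine_le hg hf b d e)
    simpa using totalDegree_affine_le hf hg a 0 c
  | step f g P h hg hP ih =>
    have h1 := ih b a 0 0 c hb ha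
    rw [map_zero, zero_mul, add_zero, add_zero] at h1
    set L : Polynomial K := Polynomial.C a⁻¹ * Polynomial.X + Polynomial.C (-(a⁻¹ * c)) with hL
    set R : Polynomial K := Polynomial.C b * P + (Polynomial.C d * Polynomial.X + Polynomial.C e)
      with hR
    have hLdeg : L.natDegree = 1 := Polynomial.natDegree_linear (inv_ne_zero ha)
    have hRdeg : R.natDegree = P.natDegree := by
      rw [hR, Polynomial.natDegree_add_eq_left_of_natDegree_lt, Polynomial.natDegree_C_mul hb]
      rw [Polynomial.natDegree_C_mul hb]
      exact (Polynomial.natDegree_linear_le).trans_lt hP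
    have haC : (C a⁻¹ * C a : MvPolynomial σ K) = 1 := by
      rw [← C_mul, inv_mul_cancel₀ ha, C_1]
    have hLg : Polynomial.aeval (C a * g + C c) L = g := by
      simp only [hL, map_add, map_mul, Polynomial.aeval_C, Polynomial.aeval_X, algebraMap_eq,
        map_neg]
      linear_combination (g) * haC
    have := IsDegreeChain.step _ _ (R.comp L) h1
      (by rwa [totalDegree_add_C_eq, totalDegree_C_mul _ ha])
      (by rwa [Polynomial.natDegree_comp, hLdeg, mul_one, hRdeg])
    rw [Polynomial.aeval_comp, hLg] at this
    convert this using 1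
    simp only [hR, map_add, map_mul, Polynomial.aeval_C, Polynomial.aeval_X, algebraMap_eq]
    ring

theorem totalDegree_add_aeval {K σ : Type*} [Field K] {f g : MvPolynomial σ K}
    {P : Polynomial K} (hg : 1 ≤ g.totalDegree) (hfg : f.totalDegree ≤ g.totalDegree)
    (hP : 2 ≤ P.natDegree) :
    (f + Polynomial.aeval g P).totalDegree = P.natDegree * g.totalDegree := by
  rw [totalDegree_add_eq_right_of_totalDegree_lt, totalDegree_aeval]
  rw [totalDegree_aeval]
  nlinarith

theorem totalDegree_add_aeval_sub_lt {K σ : Type*} [Field K] {f g : MvPolynomial σ K}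
    {P : Polynomial K} (hg : 1 ≤ g.totalDegree) (hfg : f.totalDegree ≤ g.totalDegree)
    (hP : 2 ≤ P.natDegree) :
    (f + Polynomial.aeval g P - C P.leadingCoeff * g ^ P.natDegree).totalDegree <
      P.natDegree * g.totalDegree := by
  have hP0 : P.eraseLead.natDegree < P.natDegree := by
    have := P.eraseLead_natDegree_le
    omega
  have : f + Polynomial.aeval g P - C P.leadingCoeff * g ^ P.natDegree =
      f + Polynomial.aeval g P.eraseLead := by
    have := congrArg (Polynomial.aeval g) P.eraseLead_add_C_mul_X_pow
    simp only [map_add, map_mul, map_pow, Polynomial.aeval_C, Polynomial.aeval_X,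
      algebraMap_eq] at this
    linear_combination -this
  rw [this]
  refine (totalDegree_add _ _).trans_lt (max_lt (by nlinarith) ?_)
  rw [totalDegree_aeval]
  exact Nat.mul_lt_mul_of_pos_right hP0 hg

theorem IsDegreeChain.totalDegree_lt {K σ : Type*} [Field K] {f g : MvPolynomial σ K}
    (h : IsDegreeChain f g) : (f.totalDegree ≤ 1 ∧ g.totalDegree ≤ 1) ∨
      (f.totalDegree < g.totalDegree ∧
        ∃ (c : K) (m : ℕ), (g - C c * f ^ m).totalDegree < g.totalDegree) := by
  induction h with
  | affine f g hf hg => exact Or.inl ⟨hf, hg⟩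
  | step f g P h hg hP ih =>
    have hfg : f.totalDegree ≤ g.totalDegree := by
      rcases ih with ih | ih
      · exact ih.1.trans hg
      · exact ih.1.le
    right
    rw [totalDegree_add_aeval hg hfg hP]
    exact ⟨by nlinarith, _, _, totalDegree_add_aeval_sub_lt hg hfg hP⟩

/-- The pairs related to a degree chain by an affine change. -/
def IsChainPair {K σ : Type*} [Field K] (f g : MvPolynomial σ K) : Prop :=
  IsDegreeChain g f ∨ ∃ a : K, IsDegreeChain (f - C a * g) g

theorem IsChainPair.swap {K σ : Type*} [Field K] {f g : MvPolynomial σ K}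
    (h : IsChainPair f g) : IsChainPair g f := by
  rcases h with h | ⟨a, h⟩
  · exact Or.inr ⟨0, by simpa using h⟩
  rcases eq_or_ne a 0 with rfl | ha
  · exact Or.inl (by simpa using h)
  · refine Or.inr ⟨a⁻¹, ?_⟩
    have haC : (C a⁻¹ * C a : MvPolynomial σ K) = 1 := by
      rw [← C_mul, inv_mul_cancel₀ ha, C_1]
    convert h.affine_change (-a⁻¹) a 0 1 0 (by simpa using ha) ha using 1
    · simp only [map_neg, map_zero]
      linear_combination (-g) * haC
    · simp only [map_one, map_zero]
      ring

theorem IsDegreeChain.isChainPair_add_aeval {K σ : Type*} [Field K] {h g : MvPolynomial σ K}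
    (hg : IsDegreeChain h g) (a b c : K) (Q : Polynomial K) (ha : a ≠ 0) (hb : b ≠ 0) :
    IsChainPair (C a * h + Polynomial.aeval g Q) (C b * g + C c) := by
  by_cases hQ : 2 ≤ Q.natDegree ∧ 1 ≤ g.totalDegree
  · left
    have h1 := hg.affine_change a 1 0 0 0 ha one_ne_zero
    simp only [map_zero, add_zero, zero_mul, map_one, one_mul] at h1
    simpa using (IsDegreeChain.step _ _ Q h1 hQ.2 hQ.1).affine_change b 1 c 0 0 hb one_ne_zero
  · right
    obtain ⟨l, m, hlm⟩ : ∃ l m : K, Polynomial.aeval g Q = C l * g + C m := by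
      by_cases h2 : 2 ≤ Q.natDegree
      · refine ⟨0, coeff 0 (Polynomial.aeval g Q), ?_⟩
        have : (Polynomial.aeval g Q).totalDegree = 0 := by
          rw [totalDegree_aeval, show g.totalDegree = 0 by omega, mul_zero]
        rw [map_zero, zero_mul, zero_add]
        exact totalDegree_eq_zero_iff_eq_C.1 this
      · obtain ⟨l, m, hQ⟩ := Polynomial.exists_eq_X_add_C_of_natDegree_le_one
          (show Q.natDegree ≤ 1 by omega)
        exact ⟨l, m, by rw [hQ]; simp [algebraMap_eq]⟩
    refine ⟨l * b⁻¹, ?_⟩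
    convert hg.affine_change a b (m - l * b⁻¹ * c) 0 c ha hb using 1
    · have hbC : (C b⁻¹ * C b : MvPolynomial σ K) = 1 := by
        rw [← C_mul, inv_mul_cancel₀ hb, C_1]
      simp only [hlm, map_sub, map_mul]
      linear_combination (-C l * g) * hbC
    · simp

theorem IsChainPair.exists_eq_add_aeval {K σ : Type*} [Field K] {f g : MvPolynomial σ K}
    (h : IsChainPair f g) :
    ∃ (u : MvPolynomial σ K) (Q : Polynomial K), IsDegreeChain u g ∧
      f = u + Polynomial.aeval g Q := by
  rcases h with h | ⟨a, h⟩
  · cases h with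
    | affine f g hf hg => exact ⟨f, 0, .affine _ _ hg hf, by simp⟩
    | step f g P h hg hP => exact ⟨f, P, h, rfl⟩
  · exact ⟨_, Polynomial.C a * Polynomial.X, h, by simp [algebraMap_eq]⟩

theorem isChainPair {K : Type*} [Field K] [IsAlgClosed K]
    (φ : MvPolynomial (Fin 2) K ≃ₐ[K] MvPolynomial (Fin 2) K) :
    IsChainPair (φ (X 0)) (φ (X 1)) := by
  induction mem_closure_tameGenerators φ using Submonoid.closure_induction_right with
  | one => exact Or.inl (.affine _ _ (by simp) (by simp))
  | mul_right φ _ s hs ih =>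
    rcases hs with rfl | ⟨a, b, c, P, ha, hb, h0, h1⟩
    · rw [AlgEquiv.mul_apply, AlgEquiv.mul_apply, swapVars_X_zero, swapVars_X_one]
      exact ih.swap
    · rw [AlgEquiv.mul_apply, AlgEquiv.mul_apply, h0, h1]
      obtain ⟨u, Q, hu, hQ⟩ := ih.exists_eq_add_aeval
      convert hu.isChainPair_add_aeval a b c (Polynomial.C a * Q + P) ha hb using 1
      · rw [map_add, map_mul, show φ (C a) = C a from φ.commutes a, hQ,
          ← Polynomial.aeval_algHom_apply]
        simp [algebraMap_eq]
        ring
      · rw [map_add, map_mul]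
        exact congrArg₂ _ (congrArg (· * _) (φ.commutes b)) (φ.commutes c)

/-- The degree of the component of larger degree of an automorphism of `K[x,y]` can be lowered by
subtracting a multiple of a power of the other component. -/
theorem exists_totalDegree_sub_lt_of_isAlgClosed {K : Type*} [Field K] [IsAlgClosed K]
    (φ : MvPolynomial (Fin 2) K ≃ₐ[K] MvPolynomial (Fin 2) K)
    (hle : (φ (X 0)).totalDegree ≤ (φ (X 1)).totalDegree) (h2 : 2 ≤ (φ (X 1)).totalDegree) :
    ∃ (c : K) (m : ℕ),
      (φ (X 1) - C c * φ (X 0) ^ m).totalDegree < (φ (X 1)).totalDegree := by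
  rcases isChainPair φ with h | ⟨a, h⟩
  · rcases h.totalDegree_lt with h | h <;> omega
  · rcases h.totalDegree_lt with h | ⟨hlt, c, m, h⟩
    · omega
    rcases eq_or_ne a 0 with rfl | ha
    · exact ⟨c, m, by simpa using h⟩
    · refine ⟨a⁻¹, 1, ?_⟩
      have haC : (C a⁻¹ * C a : MvPolynomial (Fin 2) K) = 1 := by
        rw [← C_mul, inv_mul_cancel₀ ha, C_1]
      rwa [show φ (X 1) - C a⁻¹ * φ (X 0) ^ 1 = C (-a⁻¹) * (φ (X 0) - C a * φ (X 1)) by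
        simp only [map_neg]
        linear_combination (-φ (X 1)) * haC, totalDegree_C_mul _ (by simpa using ha)]

/-- The extension of an automorphism of a polynomial ring to a larger field of coefficients. -/
noncomputable def mapAut {K σ : Type*} [Field K] (L : Type*) [Field L] [Algebra K L]
    (φ : MvPolynomial σ K ≃ₐ[K] MvPolynomial σ K) :
    MvPolynomial σ L ≃ₐ[L] MvPolynomial σ L :=
  have h : ∀ (ψ : MvPolynomial σ K ≃ₐ[K] MvPolynomial σ K) (u : MvPolynomial σ K),
      aeval (fun i => map (algebraMap K L) (ψ (X i))) (map (algebraMap K L) u) =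
        map (algebraMap K L) (ψ u) := by
    intro ψ u
    induction u using MvPolynomial.induction_on with
    | C a =>
      rw [show ψ (C a) = C a from ψ.commutes a, map_C, algHom_C]
      rfl
    | add p q hp hq => simp only [map_add, hp, hq]
    | mul_X p i hp => simp only [map_mul, hp, map_X, aeval_X]
  AlgEquiv.ofAlgHom (aeval fun i => map (algebraMap K L) (φ (X i)))
    (aeval fun i => map (algebraMap K L) (φ.symm (X i)))
    (by ext1 i; rw [AlgHom.comp_apply, aeval_X, h, AlgEquiv.apply_symm_apply, map_X]; rfl)
    (by
      ext1 i
      have := h φ.symm (φ (X i))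
      rw [AlgEquiv.symm_apply_apply, map_X] at this
      rw [AlgHom.comp_apply, aeval_X, this]
      rfl)

theorem mapAut_X {K σ : Type*} [Field K] (L : Type*) [Field L] [Algebra K L]
    (φ : MvPolynomial σ K ≃ₐ[K] MvPolynomial σ K) (i : σ) :
    mapAut L φ (X i) = map (algebraMap K L) (φ (X i)) := by
  simp [mapAut]

theorem totalDegree_map_algebraMap {K σ : Type*} [Field K] (L : Type*) [Field L] [Algebra K L]
    (f : MvPolynomial σ K) : (map (algebraMap K L) f).totalDegree = f.totalDegree := by
  rw [totalDegree, totalDegree, support_map_of_injective _ (algebraMap K L).injective]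

theorem exists_totalDegree_sub_lt {K : Type*} [Field K]
    (φ : MvPolynomial (Fin 2) K ≃ₐ[K] MvPolynomial (Fin 2) K)
    (hle : (φ (X 0)).totalDegree ≤ (φ (X 1)).totalDegree) (h2 : 2 ≤ (φ (X 1)).totalDegree) :
    ∃ (c : K) (m : ℕ),
      (φ (X 1) - C c * φ (X 0) ^ m).totalDegree < (φ (X 1)).totalDegree := by
  obtain ⟨c, m, h⟩ := exists_totalDegree_sub_lt_of_isAlgClosed
    (mapAut (AlgebraicClosure K) φ)
    (by rwa [mapAut_X, mapAut_X, totalDegree_map_algebraMap, totalDegree_map_algebraMap])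
    (by rwa [mapAut_X, totalDegree_map_algebraMap])
  rw [mapAut_X, mapAut_X, totalDegree_map_algebraMap, ← map_pow] at h
  obtain ⟨μ, hμ, hdeg⟩ := Finset.exists_mem_eq_sup (φ (X 1)).support
    (support_nonempty.2 (by rintro h0; simp [h0] at h2)) fun s => s.sum fun _ e => e
  change (φ (X 1)).totalDegree = _ at hdeg
  have hcoeff := coeff_eq_zero_of_totalDegree_lt (h.trans_eq hdeg)
  rw [coeff_sub, coeff_C_mul, coeff_map, coeff_map, sub_eq_zero] at hcoeff
  have hne : coeff μ (φ (X 0) ^ m) ≠ 0 := by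
    intro h0
    rw [h0, map_zero, mul_zero, map_eq_zero] at hcoeff
    exact mem_support_iff.1 hμ hcoeff
  have hc : c = algebraMap K _ (coeff μ (φ (X 1)) / coeff μ (φ (X 0) ^ m)) := by
    rw [map_div₀, hcoeff, mul_div_cancel_right₀]
    simpa using hne
  refine ⟨coeff μ (φ (X 1)) / coeff μ (φ (X 0) ^ m), m, ?_⟩
  rwa [hc, ← map_C, ← map_mul, ← map_sub, totalDegree_map_algebraMap] at h

theorem mul_elementary_one_X_zero {K : Type*} [Field K]
    (φ : MvPolynomial (Fin 2) K ≃ₐ[K] MvPolynomial (Fin 2) K) (P : Polynomial K) :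
    (φ * elementary 1 P) (X 0) = φ (X 0) :=
  congrArg φ (elementary_X_add_one 1 P)

theorem mul_elementary_one_X_one {K : Type*} [Field K]
    (φ : MvPolynomial (Fin 2) K ≃ₐ[K] MvPolynomial (Fin 2) K) (P : Polynomial K) :
    (φ * elementary 1 P) (X 1) = φ (X 1) + Polynomial.aeval (φ (X 0)) P := by
  rw [AlgEquiv.mul_apply, elementary_X_self, map_add]
  congr 1
  exact (Polynomial.aeval_algHom_apply φ _ P).symm

/-- Division of the second component of an automorphism of `K[x,y]` by the first one. -/
theorem exists_totalDegree_add_aeval_lt {K : Type*} [Field K]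
    (φ : MvPolynomial (Fin 2) K ≃ₐ[K] MvPolynomial (Fin 2) K) :
    ∃ P : Polynomial K, (φ (X 1) + Polynomial.aeval (φ (X 0)) P).totalDegree <
      max (φ (X 0)).totalDegree 2 := by
  by_cases h : (φ (X 1)).totalDegree < max (φ (X 0)).totalDegree 2
  · exact ⟨0, by simpa using h⟩
  rw [not_lt, max_le_iff] at h
  obtain ⟨c, m, hlt⟩ := exists_totalDegree_sub_lt φ h.1 h.2
  have h0 := mul_elementary_one_X_zero φ (-(Polynomial.C c * Polynomial.X ^ m))
  have h1 := mul_elementary_one_X_one φ (-(Polynomial.C c * Polynomial.X ^ m))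
  have h1' : ((φ * elementary 1 (-(Polynomial.C c * Polynomial.X ^ m)) :
      MvPolynomial (Fin 2) K ≃ₐ[K] MvPolynomial (Fin 2) K)) (X 1) = φ (X 1) - C c * φ (X 0) ^ m := by
    rw [h1]
    simp [algebraMap_eq, sub_eq_add_neg]
  obtain ⟨P, hP⟩ := exists_totalDegree_add_aeval_lt
    (φ * elementary 1 (-(Polynomial.C c * Polynomial.X ^ m)))
  rw [h0, h1, add_assoc, ← map_add] at hP
  exact ⟨_, hP⟩
termination_by (φ (X 1)).totalDegree
decreasing_by rwa [h1']

theorem algEquiv_ext_fin_two {K : Type*} [CommSemiring K]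
    {φ ψ : MvPolynomial (Fin 2) K ≃ₐ[K] MvPolynomial (Fin 2) K}
    (h0 : φ (X 0) = ψ (X 0)) (h1 : φ (X 1) = ψ (X 1)) : φ = ψ := by
  apply AlgEquiv.coe_toAlgHom_injective
  ext1 j
  fin_cases j
  · exact h0
  · exact h1

theorem finite_totalDegree_le (K : Type*) [Field K] [Finite K] (N : ℕ) :
    {f : MvPolynomial (Fin 2) K | f.totalDegree ≤ N}.Finite := by
  refine Set.Finite.of_injOn (t := Set.univ)
    (f := fun f (p : Fin (N + 1) × Fin (N + 1)) =>
      coeff (Finsupp.single 0 (p.1 : ℕ) + Finsupp.single 1 (p.2 : ℕ)) f)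
    (fun _ _ => Set.mem_univ _) ?_ Set.finite_univ
  intro f hf g hg h
  ext m
  have hm : m = Finsupp.single 0 (m 0) + Finsupp.single 1 (m 1) := by
    ext j
    fin_cases j <;> simp
  by_cases hle : m 0 ≤ N ∧ m 1 ≤ N
  · have := congrFun h (⟨m 0, by omega⟩, ⟨m 1, by omega⟩)
    simpa only [← hm] using this
  · have hlt : N < ∑ i ∈ m.support, m i := by
      rw [Finset.sum_subset (Finset.subset_univ _) (by simp), Fin.sum_univ_two]
      omega
    rw [coeff_eq_zero_of_totalDegree_lt (lt_of_le_of_lt hf hlt),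
      coeff_eq_zero_of_totalDegree_lt (lt_of_le_of_lt hg hlt)]

theorem finite_autDeg_le (K : Type*) [Field K] [Finite K] (N : ℕ) :
    {φ : MvPolynomial (Fin 2) K ≃ₐ[K] MvPolynomial (Fin 2) K | autDeg φ ≤ N}.Finite := by
  refine Set.Finite.of_injOn (f := fun φ => (φ (X 0), φ (X 1))) (fun φ hφ => ?_) ?_
    ((finite_totalDegree_le K N).prod (finite_totalDegree_le K N))
  · exact max_le_iff.1 (show max (φ (X 0)).totalDegree (φ (X 1)).totalDegree ≤ N from hφ)
  · intro φ _ ψ _ h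
    exact algEquiv_ext_fin_two (congrArg Prod.fst h) (congrArg Prod.snd h)

theorem ncard_degree_eq (K : Type*) [Field K] [Finite K] (r : ℕ) :
    {Q : Polynomial K | Q.degree = r}.ncard = (Nat.card K - 1) * Nat.card K ^ r := by
  have hlt : ∀ s : ℕ, {Q : Polynomial K | Q.degree < s}.ncard = Nat.card K ^ s ∧
      {Q : Polynomial K | Q.degree < s}.Finite := by
    intro s
    have h : {Q : Polynomial K | Q.degree < s} = Polynomial.degreeLT K s := by
      ext Q
      exact Polynomial.mem_degreeLT.symm
    rw [h]
    constructor
    · rw [← Nat.card_coe_set_eq]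
      refine (Nat.card_congr (Polynomial.degreeLTEquiv K s).toEquiv).trans ?_
      simp [Nat.card_fun]
    · exact (Finite.of_equiv _ (Polynomial.degreeLTEquiv K s).toEquiv.symm :
        Finite (Polynomial.degreeLT K s))
  have : {Q : Polynomial K | Q.degree = r} =
      {Q : Polynomial K | Q.degree < (r + 1 : ℕ)} \ {Q : Polynomial K | Q.degree < r} := by
    ext Q
    simp only [Set.mem_ofPred_eq, Set.mem_sdiff, not_lt]
    rcases eq_or_ne Q 0 with rfl | hQ
    · simp
    · rw [Polynomial.degree_eq_natDegree hQ]
      norm_cast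
      omega
  have hsub : {Q : Polynomial K | Q.degree < r} ⊆ {Q | Q.degree < (r + 1 : ℕ)} :=
    fun Q hQ => lt_trans (show Q.degree < r from hQ) (by exact_mod_cast Nat.lt_succ_self r)
  rw [this, Set.ncard_sdiff hsub (hlt r).2, (hlt _).1, (hlt r).1, pow_succ, Nat.sub_mul, one_mul, mul_comm]

/-- The automorphisms `(f, g)` with `deg f = d` and `deg g < max d 2`. -/
def reducedAuts (K : Type*) [Field K] (d : ℕ) :
    Set (MvPolynomial (Fin 2) K ≃ₐ[K] MvPolynomial (Fin 2) K) :=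
  {φ | (φ (X 0)).totalDegree = d ∧ (φ (X 1)).totalDegree < max d 2}

theorem totalDegree_algEquiv_X_pos {K : Type*} [Field K]
    (φ : MvPolynomial (Fin 2) K ≃ₐ[K] MvPolynomial (Fin 2) K) (i : Fin 2) :
    0 < (φ (X i)).totalDegree := by
  rw [Nat.pos_iff_ne_zero]
  intro h
  have h1 := congrArg φ.symm (totalDegree_eq_zero_iff_eq_C.1 h)
  rw [AlgEquiv.symm_apply_apply] at h1
  have h2 := congrArg totalDegree (h1.trans (φ.symm.commutes _))
  rw [totalDegree_X, algebraMap_eq, totalDegree_C] at h2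
  exact one_ne_zero h2

theorem setOf_totalDegree_eq_image {K : Type*} [Field K] {n d : ℕ} (hd : d ∈ n.properDivisors)
    (k : ℕ) (hk : k = if d = 1 then 2 else 1) :
    {φ : MvPolynomial (Fin 2) K ≃ₐ[K] MvPolynomial (Fin 2) K |
        (φ (X 0)).totalDegree = d ∧ (φ (X 1)).totalDegree = n} =
      (fun p : (MvPolynomial (Fin 2) K ≃ₐ[K] MvPolynomial (Fin 2) K) × Polynomial K =>
        p.1 * elementary 1 (Polynomial.X ^ k * p.2)) ''
        (reducedAuts K d ×ˢ {Q | Q.degree = ((n / d - k : ℕ) : WithBot ℕ)}) := by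
  obtain ⟨⟨e, rfl⟩, hlt⟩ := Nat.mem_properDivisors.1 hd
  have hd0 : 0 < d := Nat.pos_of_ne_zero (by rintro rfl; simp at hlt)
  have he : 1 < e := by
    by_contra h
    have := Nat.mul_le_mul_left d (not_lt.1 h)
    omega
  have hke : k ≤ e := by
    rw [hk]
    split_ifs <;> omega
  have hmax : max d 2 ≤ d * e := by
    rw [max_le_iff]
    constructor <;> nlinarith
  have hkd : (k - 1) * d < max d 2 := by
    rw [hk]
    split_ifs with h
    · rw [h]; simp
    · simp [hd0]
  have hk0 : 0 < k := by
    rw [hk]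
    split_ifs <;> omega
  rw [Nat.mul_div_cancel_left _ hd0]
  ext φ
  constructor
  · rintro ⟨hφ0, hφ1⟩
    obtain ⟨P, hP⟩ := exists_totalDegree_add_aeval_lt φ
    rw [hφ0] at hP
    have hmonic : (Polynomial.X ^ k : Polynomial K).Monic := Polynomial.monic_X_pow k
    set R := P %ₘ Polynomial.X ^ k
    set Q := P /ₘ Polynomial.X ^ k
    have hPRQ : P = R + Polynomial.X ^ k * Q := (Polynomial.modByMonic_add_div P _).symm
    have hR : (Polynomial.aeval (φ (X 0)) R).totalDegree < max d 2 := by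
      rw [totalDegree_aeval, hφ0]
      refine lt_of_le_of_lt (Nat.mul_le_mul_right d (Nat.le_sub_one_of_lt ?_)) hkd
      have := Polynomial.natDegree_modByMonic_lt P hmonic (by
        intro h
        have := congrArg Polynomial.natDegree h
        rw [Polynomial.natDegree_X_pow, Polynomial.natDegree_one] at this
        omega)
      rwa [Polynomial.natDegree_X_pow] at this
    have hψ : (φ (X 1) + Polynomial.aeval (φ (X 0)) (Polynomial.X ^ k * Q)).totalDegree <
        max d 2 := by
      have : φ (X 1) + Polynomial.aeval (φ (X 0)) (Polynomial.X ^ k * Q) =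
          φ (X 1) + Polynomial.aeval (φ (X 0)) P - Polynomial.aeval (φ (X 0)) R := by
        rw [hPRQ, map_add]
        ring
      rw [this]
      exact (totalDegree_sub _ _).trans_lt (max_lt hP hR)
    have hQ : (Polynomial.X ^ k * Q).natDegree * d = d * e := by
      by_contra hne
      nth_rw 1 [← hφ0] at hne
      rw [← totalDegree_aeval, ← hφ1] at hne
      have : (φ (X 1)).totalDegree ≤
          (φ (X 1) + Polynomial.aeval (φ (X 0)) (Polynomial.X ^ k * Q)).totalDegree := by
        rcases lt_or_gt_of_ne hne with h | h
        · rw [totalDegree_add_eq_left_of_totalDegree_lt h]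
        · rw [totalDegree_add_eq_right_of_totalDegree_lt h]
          exact h.le
      omega
    have hQe : (Polynomial.X ^ k * Q).natDegree = e :=
      Nat.eq_of_mul_eq_mul_right hd0 (hQ.trans (mul_comm _ _))
    have hQ0 : Q ≠ 0 := by
      intro h
      rw [h, mul_zero, Polynomial.natDegree_zero] at hQe
      omega
    have hQdeg : Q.natDegree = e - k := by
      rw [hmonic.natDegree_mul' hQ0, Polynomial.natDegree_X_pow] at hQe
      omega
    refine ⟨(φ * elementary 1 (Polynomial.X ^ k * Q), -Q), ⟨⟨?_, ?_⟩, ?_⟩, ?_⟩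
    · dsimp only
      rw [mul_elementary_one_X_zero, hφ0]
    · dsimp only
      rwa [mul_elementary_one_X_one]
    · change (-Q).degree = _
      rw [Polynomial.degree_neg, Polynomial.degree_eq_natDegree hQ0, hQdeg]
    · apply algEquiv_ext_fin_two
      · dsimp only
        rw [mul_elementary_one_X_zero, mul_elementary_one_X_zero]
      · dsimp only
        rw [mul_elementary_one_X_one, mul_elementary_one_X_zero, mul_elementary_one_X_one]
        simp
  · rintro ⟨⟨ψ, Q⟩, ⟨⟨hψ0, hψ1⟩, hQ⟩, rfl⟩
    dsimp only at hψ0 hψ1 hQ ⊢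
    have hQ0 : Q ≠ 0 := by
      rintro rfl
      simp at hQ
    have hQdeg : (Polynomial.X ^ k * Q).natDegree = e := by
      rw [(Polynomial.monic_X_pow k).natDegree_mul' hQ0, Polynomial.natDegree_X_pow,
        Polynomial.natDegree_eq_of_degree_eq_some hQ]
      omega
    have hdeg : (Polynomial.aeval (ψ (X 0)) (Polynomial.X ^ k * Q)).totalDegree = d * e := by
      rw [totalDegree_aeval, hQdeg, hψ0, mul_comm]
    refine ⟨by rwa [mul_elementary_one_X_zero], ?_⟩
    rw [mul_elementary_one_X_one, totalDegree_add_eq_right_of_totalDegree_lt, hdeg]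
    omega

theorem injOn_mul_elementary {K : Type*} [Field K] {d k : ℕ} (hkd : max d 2 ≤ k * d)
    (T : Set (Polynomial K)) :
    Set.InjOn
      (fun p : (MvPolynomial (Fin 2) K ≃ₐ[K] MvPolynomial (Fin 2) K) × Polynomial K =>
        p.1 * elementary 1 (Polynomial.X ^ k * p.2)) (reducedAuts K d ×ˢ T) := by
  rintro ⟨ψ, Q⟩ ⟨⟨hψ0, hψ1⟩, -⟩ ⟨θ, R⟩ ⟨⟨hθ0, hθ1⟩, -⟩ h
  dsimp only at hψ0 hψ1 hθ0 hθ1 h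
  have h0 := congrArg (fun χ => χ (X 0)) h
  have h1 := congrArg (fun χ => χ (X 1)) h
  rw [mul_elementary_one_X_zero, mul_elementary_one_X_zero] at h0
  rw [mul_elementary_one_X_one, mul_elementary_one_X_one, ← h0] at h1
  have hQR : Q = R := by
    by_contra hne
    have hsub : Polynomial.aeval (ψ (X 0)) (Polynomial.X ^ k * (Q - R)) = θ (X 1) - ψ (X 1) := by
      rw [mul_sub, map_sub]
      linear_combination h1
    have hlt : (θ (X 1) - ψ (X 1)).totalDegree < max d 2 :=
      (totalDegree_sub _ _).trans_lt (max_lt hθ1 hψ1)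
    rw [← hsub, totalDegree_aeval, hψ0, (Polynomial.monic_X_pow k).natDegree_mul'
      (sub_ne_zero.2 hne), Polynomial.natDegree_X_pow, add_mul] at hlt
    omega
  rw [hQR] at h1 ⊢
  rw [algEquiv_ext_fin_two h0 (add_right_cancel h1)]

theorem ncard_setOf_totalDegree_eq {K : Type*} [Field K] [Finite K] {n d : ℕ}
    (hd : d ∈ n.properDivisors) :
    {φ : MvPolynomial (Fin 2) K ≃ₐ[K] MvPolynomial (Fin 2) K |
        (φ (X 0)).totalDegree = d ∧ (φ (X 1)).totalDegree = n}.ncard =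
      (reducedAuts K d).ncard *
        ((Nat.card K - 1) * Nat.card K ^ (n / d - if d = 1 then 2 else 1)) := by
  have hd0 : 0 < d := by
    rcases Nat.eq_zero_or_pos d with rfl | h
    · obtain ⟨h1, h2⟩ := Nat.mem_properDivisors.1 hd
      rw [zero_dvd_iff] at h1
      omega
    · exact h
  rw [setOf_totalDegree_eq_image hd _ rfl, Set.InjOn.ncard_image, Set.ncard_prod,
    ncard_degree_eq]
  apply injOn_mul_elementary
  split_ifs with h
  · simp [h]
  · rw [one_mul, max_le_iff]
    omega

theorem mul_swapVars_X_zero {K : Type*} [Field K]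
    (φ : MvPolynomial (Fin 2) K ≃ₐ[K] MvPolynomial (Fin 2) K) :
    (φ * swapVars K) (X 0) = φ (X 1) :=
  congrArg φ swapVars_X_zero

theorem mul_swapVars_X_one {K : Type*} [Field K]
    (φ : MvPolynomial (Fin 2) K ≃ₐ[K] MvPolynomial (Fin 2) K) :
    (φ * swapVars K) (X 1) = φ (X 0) :=
  congrArg φ swapVars_X_one

/-- The automorphisms `(f, g)` with `deg f < deg g = n`. -/
def increasingAuts (K : Type*) [Field K] (n : ℕ) :
    Set (MvPolynomial (Fin 2) K ≃ₐ[K] MvPolynomial (Fin 2) K) :=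
  {φ | (φ (X 0)).totalDegree < n ∧ (φ (X 1)).totalDegree = n}

theorem finite_increasingAuts (K : Type*) [Field K] [Finite K] (n : ℕ) :
    (increasingAuts K n).Finite :=
  (finite_autDeg_le K n).subset fun _ h => max_le h.1.le h.2.le

theorem reducedAuts_eq_image (K : Type*) [Field K] {n : ℕ} (hn : 1 < n) :
    reducedAuts K n = (· * swapVars K) '' increasingAuts K n := by
  have hmax : max n 2 = n := max_eq_left hn
  ext φ
  constructor
  · rintro ⟨h0, h1⟩
    rw [hmax] at h1
    refine ⟨φ * swapVars K, ⟨?_, ?_⟩, ?_⟩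
    · rwa [mul_swapVars_X_zero]
    · rwa [mul_swapVars_X_one]
    · dsimp only
      rw [mul_assoc, swapVars_mul_swapVars, mul_one]
  · rintro ⟨ψ, ⟨h0, h1⟩, rfl⟩
    refine ⟨?_, ?_⟩
    · dsimp only
      rwa [mul_swapVars_X_zero]
    · dsimp only
      rwa [mul_swapVars_X_one, hmax]

theorem ncard_reducedAuts_eq (K : Type*) [Field K] {n : ℕ} (hn : 1 < n) :
    (reducedAuts K n).ncard = (increasingAuts K n).ncard := by
  rw [reducedAuts_eq_image K hn, Set.ncard_image_of_injective _ (mul_left_injective _)]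

theorem totalDegree_X_zero_dvd {K : Type*} [Field K]
    (φ : MvPolynomial (Fin 2) K ≃ₐ[K] MvPolynomial (Fin 2) K)
    (h : (φ (X 0)).totalDegree ≤ (φ (X 1)).totalDegree) (h2 : 1 < (φ (X 1)).totalDegree) :
    (φ (X 0)).totalDegree ∣ (φ (X 1)).totalDegree := by
  obtain ⟨P, hP⟩ := exists_totalDegree_add_aeval_lt φ
  have hlt := hP.trans_le (max_le h h2)
  have : (Polynomial.aeval (φ (X 0)) P).totalDegree = (φ (X 1)).totalDegree := by
    by_contra hne
    rcases lt_or_gt_of_ne hne with h | h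
    · rw [totalDegree_add_eq_left_of_totalDegree_lt h] at hlt
      exact lt_irrefl _ hlt
    · rw [totalDegree_add_eq_right_of_totalDegree_lt h] at hlt
      exact lt_asymm h hlt
  rw [← this, totalDegree_aeval]
  exact Dvd.intro_left _ rfl

theorem ncard_reducedAuts {K : Type*} [Field K] [Finite K] {n : ℕ} (hn : 1 < n) :
    (reducedAuts K n).ncard = ∑ d ∈ n.properDivisors, (reducedAuts K d).ncard *
        ((Nat.card K - 1) * Nat.card K ^ (n / d - if d = 1 then 2 else 1)) := by
  classical
  rw [ncard_reducedAuts_eq K hn, Set.ncard_eq_toFinset_card _ (finite_increasingAuts K n),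
    Finset.card_eq_sum_card_fiberwise (f := fun φ => (φ (X 0)).totalDegree) (t := n.properDivisors)]
  · refine Finset.sum_congr rfl fun d hd => ?_
    rw [← ncard_setOf_totalDegree_eq hd, ← Set.ncard_coe_finset]
    have hlt := (Nat.mem_properDivisors.1 hd).2
    congr 1
    ext φ
    simp only [increasingAuts, Finset.coe_filter, Set.Finite.mem_toFinset, Set.mem_ofPred_eq]
    omega
  · intro φ hφ
    obtain ⟨h0, h1⟩ := (finite_increasingAuts K n).mem_toFinset.1 hφ
    refine Nat.mem_properDivisors.2 ⟨?_, h0⟩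
    have := totalDegree_X_zero_dvd φ (h1.symm ▸ h0.le) (h1.symm ▸ hn)
    rwa [h1] at this

theorem mul_elementary_zero_X_zero {K : Type*} [Field K]
    (φ : MvPolynomial (Fin 2) K ≃ₐ[K] MvPolynomial (Fin 2) K) (c : K) :
    ((φ * elementary 0 (Polynomial.C c * Polynomial.X) :
      MvPolynomial (Fin 2) K ≃ₐ[K] MvPolynomial (Fin 2) K)) (X 0) =
        φ (X 0) + C c * φ (X 1) := by
  rw [AlgEquiv.mul_apply, elementary_X_self, map_add, map_mul, Polynomial.aeval_C,
    Polynomial.aeval_X, map_mul]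
  congr 2
  exact φ.commutes c

theorem mul_elementary_zero_X_one {K : Type*} [Field K]
    (φ : MvPolynomial (Fin 2) K ≃ₐ[K] MvPolynomial (Fin 2) K) (P : Polynomial K) :
    (φ * elementary 0 P) (X 1) = φ (X 1) :=
  congrArg φ (elementary_X_add_one 0 P)

theorem exists_totalDegree_X_zero_add_lt {K : Type*} [Field K] {n : ℕ} (hn : 1 < n)
    (φ : MvPolynomial (Fin 2) K ≃ₐ[K] MvPolynomial (Fin 2) K)
    (h0 : (φ (X 0)).totalDegree ≤ n) (h1 : (φ (X 1)).totalDegree = n) :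
    ∃ c : K, (φ (X 0) + C c * φ (X 1)).totalDegree < n := by
  obtain ⟨P, hP⟩ := exists_totalDegree_add_aeval_lt (φ * swapVars K)
  rw [mul_swapVars_X_zero, mul_swapVars_X_one, h1, max_eq_left hn] at hP
  have hdeg : P.natDegree * n ≤ n := by
    rw [← h1, ← totalDegree_aeval, h1]
    have : Polynomial.aeval (φ (X 1)) P =
        φ (X 0) + Polynomial.aeval (φ (X 1)) P - φ (X 0) := by ring
    rw [this]
    exact (totalDegree_sub _ _).trans (max_le hP.le h0)
  obtain ⟨a, b, rfl⟩ := Polynomial.exists_eq_X_add_C_of_natDegree_le_one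
    (show P.natDegree ≤ 1 by nlinarith)
  refine ⟨a, ?_⟩
  rw [← totalDegree_add_C_eq _ b, add_assoc]
  simpa [algebraMap_eq] using hP

theorem setOf_totalDegree_le_eq_image {K : Type*} [Field K] {n : ℕ} (hn : 1 < n) :
    {φ : MvPolynomial (Fin 2) K ≃ₐ[K] MvPolynomial (Fin 2) K |
        (φ (X 0)).totalDegree ≤ n ∧ (φ (X 1)).totalDegree = n} =
      (fun p : K × (MvPolynomial (Fin 2) K ≃ₐ[K] MvPolynomial (Fin 2) K) =>
        p.2 * elementary 0 (Polynomial.C p.1 * Polynomial.X)) ''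
        (Set.univ ×ˢ increasingAuts K n) := by
  ext φ
  constructor
  · rintro ⟨h0, h1⟩
    obtain ⟨c, hc⟩ := exists_totalDegree_X_zero_add_lt hn φ h0 h1
    refine ⟨(-c, φ * elementary 0 (Polynomial.C c * Polynomial.X)),
      ⟨Set.mem_univ _, ?_, ?_⟩, ?_⟩
    · dsimp only
      rwa [mul_elementary_zero_X_zero]
    · dsimp only
      rwa [mul_elementary_zero_X_one]
    · apply algEquiv_ext_fin_two
      · dsimp only
        rw [mul_elementary_zero_X_zero, mul_elementary_zero_X_zero, mul_elementary_zero_X_one]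
        simp
      · dsimp only
        rw [mul_elementary_zero_X_one, mul_elementary_zero_X_one]
  · rintro ⟨⟨c, ψ⟩, ⟨-, h0, h1⟩, rfl⟩
    dsimp only at h0 h1 ⊢
    refine ⟨?_, by rwa [mul_elementary_zero_X_one]⟩
    rw [mul_elementary_zero_X_zero]
    refine (totalDegree_add _ _).trans (max_le h0.le ((totalDegree_mul _ _).trans ?_))
    rw [totalDegree_C, zero_add, h1]

theorem injOn_mul_elementary_zero {K : Type*} [Field K] (n : ℕ) :
    Set.InjOn (fun p : K × (MvPolynomial (Fin 2) K ≃ₐ[K] MvPolynomial (Fin 2) K) =>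
        p.2 * elementary 0 (Polynomial.C p.1 * Polynomial.X))
        (Set.univ ×ˢ increasingAuts K n) := by
  rintro ⟨c, ψ⟩ ⟨-, hψ0, hψ1⟩ ⟨d, θ⟩ ⟨-, hθ0, hθ1⟩ h
  dsimp only at hψ0 hψ1 hθ0 hθ1 h
  have h0 := congrArg (fun χ => χ (X 0)) h
  have h1 := congrArg (fun χ => χ (X 1)) h
  rw [mul_elementary_zero_X_zero, mul_elementary_zero_X_zero] at h0
  rw [mul_elementary_zero_X_one, mul_elementary_zero_X_one] at h1
  have hcd : c = d := by
    by_contra hne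
    have hsub : C (c - d) * ψ (X 1) = θ (X 0) - ψ (X 0) := by
      rw [← h1] at h0
      rw [C_sub]
      linear_combination h0
    have hlt : (θ (X 0) - ψ (X 0)).totalDegree < n :=
      (totalDegree_sub _ _).trans_lt (max_lt hθ0 hψ0)
    rw [← hsub, totalDegree_C_mul _ (sub_ne_zero.2 hne), hψ1] at hlt
    exact lt_irrefl _ hlt
  subst hcd
  rw [← h1] at h0
  rw [algEquiv_ext_fin_two (add_right_cancel h0) h1]

theorem ncard_autDeg_eq {K : Type*} [Field K] [Finite K] {n : ℕ} (hn : 1 < n) :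
    {φ : MvPolynomial (Fin 2) K ≃ₐ[K] MvPolynomial (Fin 2) K | autDeg φ = n}.ncard =
      (Nat.card K + 1) * (reducedAuts K n).ncard := by
  have h : {φ : MvPolynomial (Fin 2) K ≃ₐ[K] MvPolynomial (Fin 2) K | autDeg φ = n} =
      {φ | (φ (X 0)).totalDegree ≤ n ∧ (φ (X 1)).totalDegree = n} ∪ reducedAuts K n := by
    ext φ
    simp only [autDeg, reducedAuts, Set.mem_ofPred_eq, Set.mem_union]
    omega
  have hfin : {φ : MvPolynomial (Fin 2) K ≃ₐ[K] MvPolynomial (Fin 2) K | autDeg φ = n}.Finite :=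
    (finite_autDeg_le K n).subset fun _ h => le_of_eq h
  rw [h] at hfin ⊢
  rw [Set.ncard_union_eq _ (hfin.subset Set.subset_union_left)
    (hfin.subset Set.subset_union_right), setOf_totalDegree_le_eq_image hn,
    (injOn_mul_elementary_zero n).ncard_image, Set.ncard_prod, Set.ncard_univ,
    ncard_reducedAuts_eq K hn]
  · ring
  · rw [Set.disjoint_left]
    rintro φ ⟨-, h1⟩ ⟨-, h2⟩
    omega

/-- The automorphism of `K[x,y]` given by an invertible affine change of variables. -/
noncomputable def affineAut {K : Type*} [Field K] (M : GL (Fin 2) K) (v : Fin 2 → K) :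
    MvPolynomial (Fin 2) K ≃ₐ[K] MvPolynomial (Fin 2) K :=
  AlgEquiv.ofAlgHom
    (aeval fun i => ∑ j, C (M.1 i j) * X j + C (v i))
    (aeval fun i => ∑ j, C (M⁻¹.1 i j) * (X j - C (v j)))
    (by
      have h : ∀ i k, ∑ j, M⁻¹.1 i j * M.1 j k = if i = k then 1 else 0 := fun i k => by
        rw [← Matrix.mul_apply, ← Units.val_mul, inv_mul_cancel, Units.val_one, Matrix.one_apply]
      ext1 i
      simp only [AlgHom.comp_apply, aeval_X, map_sum, map_mul, map_sub, algHom_C, algebraMap_eq,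
        add_sub_cancel_right, Finset.mul_sum, AlgHom.coe_id, id_eq]
      rw [Finset.sum_comm]
      simp only [← mul_assoc, ← Finset.sum_mul, ← C_mul, ← map_sum, h]
      simp)
    (by
      have h : ∀ i k, ∑ j, M.1 i j * M⁻¹.1 j k = if i = k then 1 else 0 := fun i k => by
        rw [← Matrix.mul_apply, ← Units.val_mul, mul_inv_cancel, Units.val_one, Matrix.one_apply]
      ext1 i
      simp only [AlgHom.comp_apply, aeval_X, map_sum, map_mul, map_add, algHom_C, algebraMap_eq,
        Finset.mul_sum, AlgHom.coe_id, id_eq]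
      rw [Finset.sum_comm]
      simp only [← mul_assoc, ← Finset.sum_mul, ← C_mul, ← map_sum, h]
      simp)

theorem affineAut_X {K : Type*} [Field K] (M : GL (Fin 2) K) (v : Fin 2 → K) (i : Fin 2) :
    affineAut M v (X i) = ∑ j, C (M.1 i j) * X j + C (v i) := by
  simp [affineAut]

theorem coeff_single_affine {K : Type*} [Field K] (a : Fin 2 → K) (b : K) (i : Fin 2) :
    coeff (Finsupp.single i 1) (∑ j, C (a j) * X j + C b) = a i := by
  have h : ∀ i : Fin 2, (0 : Fin 2 →₀ ℕ) ≠ Finsupp.single i 1 := fun i h => by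
    simpa using DFunLike.congr_fun h i
  fin_cases i <;> simp [coeff_C_mul, coeff_X, coeff_C, Finsupp.single_left_inj, h]

theorem eq_sum_of_totalDegree_le_one {K : Type*} [Field K] {f : MvPolynomial (Fin 2) K}
    (hf : f.totalDegree ≤ 1) :
    f = ∑ j, C (coeff (Finsupp.single j 1) f) * X j + C (coeff 0 f) := by
  ext m
  by_cases hm : m.degree ≤ 1
  · have h : m = 0 ∨ ∃ i, m = Finsupp.single i 1 := by
      rw [Finsupp.degree_eq_sum, Fin.sum_univ_two] at hm
      rcases Nat.eq_zero_or_pos (m 0) with h0 | h0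
      · rcases Nat.eq_zero_or_pos (m 1) with h1 | h1
        · left
          ext j
          fin_cases j <;> simp [h0, h1]
        · refine Or.inr ⟨1, ?_⟩
          ext j
          fin_cases j <;> simp <;> omega
      · refine Or.inr ⟨0, ?_⟩
        ext j
        fin_cases j <;> simp <;> omega
    rcases h with rfl | ⟨i, rfl⟩
    · simp
    · rw [coeff_single_affine]
  · have h := (totalDegree_affine_le (σ := Fin 2) (totalDegree_X (R := K) (0 : Fin 2)).le
      (totalDegree_X (R := K) (1 : Fin 2)).le (coeff (Finsupp.single 0 1) f)
      (coeff (Finsupp.single 1 1) f) (coeff 0 f))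
    rw [Fin.sum_univ_two, coeff_eq_zero_of_totalDegree_lt, coeff_eq_zero_of_totalDegree_lt]
    · exact h.trans_lt (not_le.1 hm)
    · exact hf.trans_lt (not_le.1 hm)

theorem coeff_zero_affine {K : Type*} [Field K] (a : Fin 2 → K) (b : K) :
    coeff 0 (∑ j, C (a j) * X j + C b : MvPolynomial (Fin 2) K) = b := by
  simp

theorem injective_affineAut {K : Type*} [Field K] :
    Function.Injective fun p : GL (Fin 2) K × (Fin 2 → K) => affineAut p.1 p.2 := by
  rintro ⟨M, v⟩ ⟨N, w⟩ h
  have hX : ∀ i, (∑ j, C (M.1 i j) * X j + C (v i) : MvPolynomial (Fin 2) K) =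
      ∑ j, C (N.1 i j) * X j + C (w i) := by
    intro i
    rw [← affineAut_X, ← affineAut_X]
    exact congrArg (fun χ => χ (X i)) h
  have hv : v = w := by
    ext i
    rw [← coeff_zero_affine (M.1 i) (v i), hX, coeff_zero_affine]
  have hM : M = N := by
    ext i j
    rw [← coeff_single_affine (M.1 i) (v i), hX, coeff_single_affine]
  rw [hv, hM]

theorem exists_eq_affineAut {K : Type*} [Field K]
    (φ : MvPolynomial (Fin 2) K ≃ₐ[K] MvPolynomial (Fin 2) K)
    (h : ∀ i, (φ (X i)).totalDegree ≤ 1) : ∃ M v, affineAut M v = φ := by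
  set A : Matrix (Fin 2) (Fin 2) K := fun i j => coeff (Finsupp.single j 1) (φ (X i)) with hA
  set v : Fin 2 → K := fun i => coeff 0 (φ (X i)) with hv
  have hφ : ∀ i, φ (X i) = ∑ j, C (A i j) * X j + C (v i) := fun i =>
    eq_sum_of_totalDegree_le_one (h i)
  have hC : ∀ c : K, φ (C c) = C c := fun c => φ.commutes c
  have hunit : IsUnit A := by
    rw [← Matrix.vecMul_injective_iff_isUnit]
    refine (injective_iff_map_eq_zero A.vecMulLinear).2 fun u hu => ?_
    have hu' : ∀ j, u 0 * A 0 j + u 1 * A 1 j = 0 := by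
      intro j
      have := congrFun hu j
      simpa [Matrix.vecMul, dotProduct] using this
    have h1 : φ (∑ j, C (u j) * X j + C 0) = φ (C (u 0 * v 0 + u 1 * v 1)) := by
      have e0 := congrArg (C (σ := Fin 2)) (hu' 0)
      have e1 := congrArg (C (σ := Fin 2)) (hu' 1)
      simp only [C_add, C_mul, C_0] at e0 e1
      simp only [map_add, map_mul, map_zero, hC, hφ, Fin.sum_univ_two]
      linear_combination X 0 * e0 + X 1 * e1
    have h2 := φ.injective h1
    ext j
    rw [← coeff_single_affine u 0 j, h2, coeff_C, if_neg]
    · rfl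
    · intro h0
      simpa using congrArg (fun s => s j) h0
  refine ⟨hunit.unit, v, algEquiv_ext_fin_two ?_ ?_⟩
  · rw [affineAut_X, hφ]
    rfl
  · rw [affineAut_X, hφ]
    rfl

theorem setOf_autDeg_eq_one (K : Type*) [Field K] :
    {φ : MvPolynomial (Fin 2) K ≃ₐ[K] MvPolynomial (Fin 2) K | autDeg φ = 1} =
      reducedAuts K 1 := by
  ext φ
  have h0 := totalDegree_algEquiv_X_pos φ 0
  have h1 := totalDegree_algEquiv_X_pos φ 1
  simp only [autDeg, reducedAuts, Set.mem_ofPred_eq]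
  omega

theorem ncard_reducedAuts_one (K : Type*) [Field K] [Fintype K] :
    (reducedAuts K 1).ncard =
      Fintype.card K ^ 3 * (Fintype.card K - 1) ^ 2 * (Fintype.card K + 1) := by
  have h : reducedAuts K 1 =
      (fun p : GL (Fin 2) K × (Fin 2 → K) => affineAut p.1 p.2) '' Set.univ := by
    ext φ
    rw [← setOf_autDeg_eq_one]
    constructor
    · intro hφ
      have hmax : max (φ (X 0)).totalDegree (φ (X 1)).totalDegree ≤ 1 := le_of_eq hφ
      obtain ⟨M, v, hMv⟩ := exists_eq_affineAut φ (Fin.forall_fin_two.2 (max_le_iff.1 hmax))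
      exact ⟨(M, v), Set.mem_univ _, hMv⟩
    · rintro ⟨⟨M, v⟩, -, rfl⟩
      have hle : ∀ i, (affineAut M v (X i)).totalDegree ≤ 1 := by
        intro i
        rw [affineAut_X, Fin.sum_univ_two]
        exact totalDegree_affine_le (totalDegree_X _).le (totalDegree_X _).le _ _ _
      exact le_antisymm (max_le (hle 0) (hle 1))
        ((totalDegree_algEquiv_X_pos (affineAut M v) 0).trans_le (le_max_left _ _))
  rw [h, Set.ncard_image_of_injective _ injective_affineAut, Set.ncard_univ, Nat.card_prod,
    Matrix.card_GL_field, Fin.prod_univ_two, Nat.card_fun]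
  obtain ⟨r, hr⟩ : ∃ r, Fintype.card K = r + 1 := ⟨_, (Nat.sub_add_cancel Fintype.card_pos).symm⟩
  have h1 : (r + 1) ^ 2 - 1 = r * (r + 2) := by
    exact Nat.sub_eq_of_eq_add (by ring)
  have h2 : (r + 1) ^ 2 - (r + 1) = r * (r + 1) := by
    exact Nat.sub_eq_of_eq_add (by ring)
  simp only [hr, Nat.card_eq_fintype_card, Fintype.card_fin, Fin.val_zero, Fin.val_one, pow_zero,
    pow_one, h1, h2, Nat.add_sub_cancel]
  ring

/-- The ordered factorizations of `n` into factors at least `2`. -/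
def IsOrderedFactorization (n : ℕ) (l : List ℕ) : Prop :=
  (∀ m ∈ l, 2 ≤ m) ∧ l.prod = n

theorem isOrderedFactorization_one_iff (l : List ℕ) :
    IsOrderedFactorization 1 l ↔ l = [] := by
  constructor
  · rintro ⟨h, hl⟩
    cases l with
    | nil => rfl
    | cons a t =>
      have := h a List.mem_cons_self
      have := Nat.eq_one_of_mul_eq_one_right (by simpa using hl)
      omega
  · rintro rfl
    exact ⟨by simp, rfl⟩

theorem IsOrderedFactorization.exists_cons {n : ℕ} (hn : 1 < n) {l : List ℕ}
    (h : IsOrderedFactorization n l) : ∃ t : List ℕ, t.prod ∈ n.properDivisors ∧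
      IsOrderedFactorization t.prod t ∧ l = (n / t.prod) :: t := by
  obtain ⟨h2, hl⟩ := h
  cases l with
  | nil => simp at hl; omega
  | cons a t =>
    rw [List.prod_cons] at hl
    have ha := h2 a List.mem_cons_self
    have hpos : 0 < t.prod := Nat.pos_of_ne_zero (by rintro h0; simp [h0] at hl; omega)
    refine ⟨t, ?_, ⟨fun m hm => h2 m (List.mem_cons_of_mem _ hm), rfl⟩, ?_⟩
    · rw [Nat.mem_properDivisors, ← hl]
      exact ⟨Dvd.intro_left _ rfl, by nlinarith⟩
    · rw [← hl, Nat.mul_div_cancel _ hpos]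

theorem IsOrderedFactorization.cons {n d : ℕ} {t : List ℕ} (hd : d ∈ n.properDivisors)
    (h : IsOrderedFactorization d t) : IsOrderedFactorization n ((n / d) :: t) := by
  obtain ⟨h2, rfl⟩ := h
  obtain ⟨hdvd, hlt⟩ := Nat.mem_properDivisors.1 hd
  refine ⟨?_, by rw [List.prod_cons, Nat.div_mul_cancel hdvd]⟩
  intro m hm
  rcases List.mem_cons.1 hm with rfl | hm
  · exact Nat.one_lt_div_of_mem_properDivisors hd
  · exact h2 m hm

theorem finite_isOrderedFactorization {n : ℕ} (hn : 0 < n) :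
    {l | IsOrderedFactorization n l}.Finite := by
  induction n using Nat.strong_induction_on with
  | _ n ih =>
    rcases Nat.lt_or_ge 1 n with h1 | h1
    · have hfin : (⋃ d ∈ n.properDivisors,
          (List.cons (n / d)) '' {l | IsOrderedFactorization d l}).Finite := by
        refine Set.Finite.biUnion (Finset.finite_toSet _) fun d hd => (ih d ?_ ?_).image _
        · exact (Nat.mem_properDivisors.1 hd).2
        · exact Nat.pos_of_mem_properDivisors hd
      refine hfin.subset fun l hl => ?_
      obtain ⟨t, ht, htf, rfl⟩ := IsOrderedFactorization.exists_cons h1 hl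
      simp only [Set.mem_iUnion]
      exact ⟨_, ht, t, htf, rfl⟩
    · obtain rfl : n = 1 := by omega
      refine (Set.finite_singleton []).subset fun l hl => ?_
      exact (isOrderedFactorization_one_iff l).1 hl

open scoped Classical in
/-- The weighted number of ordered factorizations of `n`, where a factor `m` has weight
`a * x ^ m`. -/
noncomputable def factorizationSum (a x : ℝ) (n : ℕ) : ℝ :=
  ∑' l : List ℕ, if IsOrderedFactorization n l then a ^ l.length * x ^ l.sum else 0

theorem factorizationSum_eq_sum (a x : ℝ) {n : ℕ} (hn : 0 < n) :
    factorizationSum a x n =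
      ∑ l ∈ (finite_isOrderedFactorization hn).toFinset, a ^ l.length * x ^ l.sum := by
  classical
  rw [factorizationSum, tsum_eq_sum (s := (finite_isOrderedFactorization hn).toFinset)]
  · refine Finset.sum_congr rfl fun l hl => if_pos ?_
    exact (finite_isOrderedFactorization hn).mem_toFinset.1 hl
  · intro l hl
    exact if_neg fun h => hl ((finite_isOrderedFactorization hn).mem_toFinset.2 h)

theorem factorizationSum_one (a x : ℝ) : factorizationSum a x 1 = 1 := by
  have : (finite_isOrderedFactorization Nat.one_pos).toFinset = {[]} := by
    ext l
    rw [Set.Finite.mem_toFinset, Finset.mem_singleton]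
    exact isOrderedFactorization_one_iff l
  rw [factorizationSum_eq_sum a x Nat.one_pos, this]
  simp

theorem factorizationSum_eq (a x : ℝ) {n : ℕ} (hn : 1 < n) :
    factorizationSum a x n =
      ∑ d ∈ n.properDivisors, factorizationSum a x d * (a * x ^ (n / d)) := by
  classical
  rw [factorizationSum_eq_sum a x (by omega), ← Finset.sum_fiberwise_of_maps_to
    (t := n.properDivisors) (g := fun l => l.tail.prod)]
  · refine Finset.sum_congr rfl fun d hd => ?_
    have hd0 := Nat.pos_of_mem_properDivisors hd
    rw [factorizationSum_eq_sum a x hd0, Finset.sum_mul]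
    refine (Finset.sum_bij (fun t _ => (n / d) :: t) ?_ ?_ ?_ ?_).symm
    · intro t ht
      replace ht : IsOrderedFactorization d t :=
        (finite_isOrderedFactorization hd0).mem_toFinset.1 ht
      rw [Finset.mem_filter, Set.Finite.mem_toFinset]
      exact ⟨ht.cons hd, ht.2⟩
    · intro s _ t _ h
      exact List.tail_eq_of_cons_eq h
    · intro l hl
      rw [Finset.mem_filter, Set.Finite.mem_toFinset] at hl
      obtain ⟨t, ht, htf, rfl⟩ := IsOrderedFactorization.exists_cons hn hl.1
      obtain rfl : t.prod = d := hl.2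
      exact ⟨t, (Set.Finite.mem_toFinset _).2 htf, rfl⟩
    · intro t _
      rw [List.length_cons, List.sum_cons, pow_succ, pow_add]
      ring
  · intro l hl
    obtain ⟨t, ht, -, rfl⟩ := IsOrderedFactorization.exists_cons hn
      ((finite_isOrderedFactorization (Nat.zero_lt_of_lt hn)).mem_toFinset.1 hl)
    exact ht

theorem ncard_reducedAuts_eq_factorizationSum (K : Type*) [Field K] [Fintype K] {n : ℕ}
    (hn : 1 < n) (q : ℝ) (hq : q = Fintype.card K) :
    ((reducedAuts K n).ncard : ℝ) =
      q ^ 2 * (q - 1) ^ 2 * (q + 1) * factorizationSum ((q - 1) / q) q n := by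
  have hq0 : q ≠ 0 := by
    rw [hq]
    exact_mod_cast Fintype.card_ne_zero
  have hcast : ((Nat.card K - 1 : ℕ) : ℝ) = q - 1 := by
    rw [Nat.card_eq_fintype_card, Nat.cast_sub Fintype.card_pos, hq, Nat.cast_one]
  induction n using Nat.strong_induction_on with
  | _ n ih =>
    rw [ncard_reducedAuts hn, factorizationSum_eq _ _ hn, Finset.mul_sum, Nat.cast_sum]
    refine Finset.sum_congr rfl fun d hd => ?_
    have hnd : 1 < n / d := Nat.one_lt_div_of_mem_properDivisors hd
    rw [Nat.cast_mul, Nat.cast_mul, hcast, Nat.cast_pow, Nat.card_eq_fintype_card, ← hq]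
    rcases eq_or_ne d 1 with rfl | hd1
    · obtain ⟨m, hm⟩ := Nat.exists_eq_add_of_le hnd
      rw [ncard_reducedAuts_one, factorizationSum_one, if_pos rfl, hm]
      push_cast [Nat.cast_sub (Fintype.card_pos (α := K))]
      rw [← hq, show Nat.succ 1 + m - 2 = m by omega, pow_add]
      field_simp
    · have hd0 := Nat.pos_of_mem_properDivisors hd
      obtain ⟨m, hm⟩ := Nat.exists_eq_add_of_lt hnd
      rw [ih d (Nat.mem_properDivisors.1 hd).2 (by omega), if_neg hd1, hm, Nat.add_sub_cancel,
        pow_succ _ (1 + m)]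
      field_simp

open scoped Classical in
/-- The number `p_n` of automorphisms of `𝔽_q[x,y]` of degree `n`:
`p₁ = q³(q−1)²(q+1)` and, for `n > 1`,
`p_n = (q(q−1)(q+1))² Σ ((q−1)/q)^k q^(n₁+⋯+n_k)`, the sum running over all ordered
factorizations `n = n₁⋯n_k` with all `n_i ≥ 2`. -/
theorem stmt_7 (F : Type*) [Field F] [Fintype F] (q : ℕ) (hq : q = Fintype.card F)
    (n : ℕ) :
    (n = 1 →
      Nat.card {φ : MvPolynomial (Fin 2) F ≃ₐ[F] MvPolynomial (Fin 2) F // autDeg φ = n}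
        = q ^ 3 * (q - 1) ^ 2 * (q + 1)) ∧
    (1 < n →
      (Nat.card {φ : MvPolynomial (Fin 2) F ≃ₐ[F] MvPolynomial (Fin 2) F // autDeg φ = n} : ℝ)
        = ((q : ℝ) * ((q : ℝ) - 1) * ((q : ℝ) + 1)) ^ 2 *
            ∑' l : List ℕ,
              if (∀ m ∈ l, 2 ≤ m) ∧ l.prod = n then
                (((q : ℝ) - 1) / (q : ℝ)) ^ l.length * (q : ℝ) ^ (l.sum : ℕ)
              else 0) := by
  classical
  subst hq
  constructor
  · rintro rfl
    rw [← ncard_reducedAuts_one, ← setOf_autDeg_eq_one]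
    rfl
  · intro hn
    have h1 : Nat.card {φ : MvPolynomial (Fin 2) F ≃ₐ[F] MvPolynomial (Fin 2) F // autDeg φ = n} =
        (Fintype.card F + 1) * (reducedAuts F n).ncard := by
      rw [← Nat.card_eq_fintype_card, ← ncard_autDeg_eq hn]
      rfl
    have h2 : (∑' l : List ℕ, if (∀ m ∈ l, 2 ≤ m) ∧ l.prod = n then
        (((Fintype.card F : ℝ) - 1) / (Fintype.card F : ℝ)) ^ l.length *
          (Fintype.card F : ℝ) ^ (l.sum : ℕ) else 0) =
        factorizationSum (((Fintype.card F : ℝ) - 1) / Fintype.card F) (Fintype.card F) n := by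
      rw [factorizationSum]
      congr 1
      ext l
      congr 1
    rw [h1, h2, Nat.cast_mul, ncard_reducedAuts_eq_factorizationSum F hn _ rfl]
    push_cast
    ring
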